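/- For every integer k ≥ 1 there is a constant C_k > 0 such that for all integers R ≥ 1 and all integers n with 0 ≤ n ≤ kR, one has |I_k(n;R) − γ_k(n/R)·R^{k²−1}| ≤ C_k · R^{k²−2}, where for c ∈ [0,k] the constant γ_k(c) is defined by γ_k(c) = (1/(k! · G(1+k)²)) · ∫_{D_c} ∏_{1 ≤ i < j ≤ k} (w_i − w_j)² dw_1⋯dw_{k−1}, where D_c = { (w_1,…,w_{k−1}) ∈ [0,1]^{k−1} : 0 ≤ c − (w_1 + ⋯ + w_{k−1}) ≤ 1 }, w_k is set equal to c − (w_1 + ⋯ + w_{k−1}) in the integrand, and G(1+k) = 1!·2!·⋯·(k−1)!. -/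

import Mathlib

open MeasureTheory Polynomial

noncomputable instance (R : ℕ) : MeasurableSpace (Matrix.unitaryGroup (Fin R) ℂ) := borel _
instance (R : ℕ) : BorelSpace (Matrix.unitaryGroup (Fin R) ℂ) := ⟨rfl⟩

/-- The trace of the `j`-th exterior power of `θ`, i.e. the coefficient of `T^j` in
`det(I + T·θ)`. -/
noncomputable def extPowTrace (R : ℕ) (θ : Matrix.unitaryGroup (Fin R) ℂ) (j : ℕ) : ℂ :=
  ((1 + (X : ℂ[X]) • (θ : Matrix (Fin R) (Fin R) ℂ).map C).det).coeff j

/-- The matrix integral `I_k(n;R)`: the integral over the unitary group `U(R)` of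
`|∑_{n₁+⋯+n_k=n} ∏ᵢ Tr(Λ^{nᵢ} θ)|²`, with respect to the measure `μ` (which in the
theorems below is assumed to be the Haar probability measure). The summands with some
`nᵢ > R` vanish, since `det(I + T·θ)` has degree `R`. -/
noncomputable def matrixIntegral (k n R : ℕ)
    (μ : Measure (Matrix.unitaryGroup (Fin R) ℂ)) : ℝ :=
  ∫ θ, ‖∑ x ∈ Finset.Nat.antidiagonalTuple k n, ∏ i, extPowTrace R θ (x i)‖ ^ 2 ∂μ

/-- The full vector `(w₁, …, w_{k-1}, w_k)` where `w_k := c − (w₁ + ⋯ + w_{k-1})`. -/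
noncomputable def wFull (k : ℕ) (c : ℝ) (w : Fin (k - 1) → ℝ) (j : Fin k) : ℝ :=
  if h : (j : ℕ) < k - 1 then w ⟨j, h⟩ else c - ∑ i, w i

/-- The region `D_c ⊆ [0,1]^{k-1}` on which `w_k = c − (w₁ + ⋯ + w_{k-1})` also lies
in `[0,1]`. -/
def Dregion (k : ℕ) (c : ℝ) : Set (Fin (k - 1) → ℝ) :=
  {w | (∀ i, w i ∈ Set.Icc (0 : ℝ) 1) ∧ c - ∑ i, w i ∈ Set.Icc (0 : ℝ) 1}

/-- `γ_k(c) = (1/(k!·G(1+k)²)) ∫_{D_c} ∏_{i<j} (wᵢ − w_j)² dw₁⋯dw_{k-1}`, with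
`w_k = c − (w₁ + ⋯ + w_{k-1})` and `G(1+k) = 1!·2!⋯(k−1)! = ∏_{i<k} i!`. -/
noncomputable def gammaK (k : ℕ) (c : ℝ) : ℝ :=
  (1 / ((k.factorial : ℝ) * (∏ i ∈ Finset.range k, (Nat.factorial i : ℝ)) ^ 2)) *
    ∫ w in Dregion k c,
      ∏ p ∈ Finset.univ.filter (fun p : Fin k × Fin k => p.1 < p.2),
        (wFull k c w p.1 - wFull k c w p.2) ^ 2

section UnitaryCalculus

open Matrix
open scoped Matrix.Norms.L2Operator

variable {R : ℕ}

lemma norm_le_one_of_mem_unitary {U : Matrix (Fin R) (Fin R) ℂ}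
    (hU : U ∈ unitary (Matrix (Fin R) (Fin R) ℂ)) : ‖U‖ ≤ 1 := by
  rcases subsingleton_or_nontrivial (Matrix (Fin R) (Fin R) ℂ) with h | h
  · simp [Subsingleton.elim U 0]
  · exact (CStarRing.norm_of_mem_unitary hU).le

instance compactSpace_unitaryGroup : CompactSpace (Matrix.unitaryGroup (Fin R) ℂ) := by
  refine isCompact_iff_compactSpace.mp (Metric.isCompact_of_isClosed_isBounded
    (isClosed_unitary (R := Matrix (Fin R) (Fin R) ℂ)) ?_)
  refine (isBounded_iff_forall_norm_le).mpr ⟨1, fun U hU => ?_⟩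
  exact norm_le_one_of_mem_unitary hU

/-- Jacobi's formula at an invertible matrix. -/
lemma hasDerivAt_matrix_det {A : ℂ → Matrix (Fin R) (Fin R) ℂ} {A' : Matrix (Fin R) (Fin R) ℂ}
    {z : ℂ} (hA : HasDerivAt A A' z) (hu : IsUnit (A z).det) :
    HasDerivAt (fun w => (A w).det) ((A z).det * ((A z)⁻¹ * A').trace) z := by
  have hdiff : Differentiable ℂ (fun M : Matrix (Fin R) (Fin R) ℂ => M.det) := by
    simp only [Matrix.det_apply]
    have h (i j : Fin R) : Differentiable ℂ (fun M : Matrix (Fin R) (Fin R) ℂ => M i j) :=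
      (Matrix.entryLinearMap ℂ ℂ i j).toContinuousLinearMap.differentiable
    fun_prop
  have hone (X : Matrix (Fin R) (Fin R) ℂ) :
      fderiv ℂ (fun M : Matrix (Fin R) (Fin R) ℂ => M.det) 1 X = X.trace := by
    have h1 : HasDerivAt (fun w : ℂ => (1 + w • X).det)
        (fderiv ℂ (fun M : Matrix (Fin R) (Fin R) ℂ => M.det) 1 X) 0 := by
      have hc : HasDerivAt (fun w : ℂ => 1 + w • X) X 0 := by
        simpa using ((hasDerivAt_id (0 : ℂ)).smul_const X).const_add 1
      have hd : HasFDerivAt (fun M : Matrix (Fin R) (Fin R) ℂ => M.det)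
          (fderiv ℂ (fun M : Matrix (Fin R) (Fin R) ℂ => M.det) 1) (1 + (0 : ℂ) • X) := by
        simpa using (hdiff 1).hasFDerivAt
      exact hd.comp_hasDerivAt (0 : ℂ) hc
    have h2 : HasDerivAt (fun w : ℂ => (1 + w • X).det) X.trace 0 := by
      rw [funext fun w : ℂ => Matrix.det_one_add_smul w X]
      have hp := ((1 + (Polynomial.X : ℂ[X]) • X.map Polynomial.C).det.divX.divX).hasDerivAt (0 : ℂ)
      have := (((hasDerivAt_id (0 : ℂ)).const_mul X.trace).const_add 1).add
        (hp.mul ((hasDerivAt_id (0 : ℂ)).pow 2))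
      refine HasDerivAt.congr_deriv this ?_
      simp
    exact h1.unique h2
  have hB : HasDerivAt (fun w => (A z)⁻¹ * A w) ((A z)⁻¹ * A') z := hA.const_mul _
  have hd : HasFDerivAt (fun M : Matrix (Fin R) (Fin R) ℂ => M.det)
      (fderiv ℂ (fun M : Matrix (Fin R) (Fin R) ℂ => M.det) 1) ((A z)⁻¹ * A z) := by
    rw [Matrix.nonsing_inv_mul _ hu]
    exact (hdiff 1).hasFDerivAt
  have := (hd.comp_hasDerivAt z hB).const_mul (A z).det
  rw [hone] at this
  have heq : (fun w => (A w).det) = fun w => (A z).det * ((A z)⁻¹ * A w).det := by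
    ext w
    rw [Matrix.det_mul, ← mul_assoc, Matrix.det_nonsing_inv, Ring.mul_inverse_cancel _ hu, one_mul]
  rw [heq]
  exact this

lemma hasDerivAt_matrix_inv {A : ℂ → Matrix (Fin R) (Fin R) ℂ} {A' : Matrix (Fin R) (Fin R) ℂ}
    {z : ℂ} (hA : HasDerivAt A A' z) (hu : IsUnit (A z).det) :
    HasDerivAt (fun w => (A w)⁻¹) (-((A z)⁻¹ * A' * (A z)⁻¹)) z := by
  obtain ⟨u, hu'⟩ := (Matrix.isUnit_iff_isUnit_det _).mpr hu
  have h := hasFDerivAt_ringInverse (𝕜 := ℂ) u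
  rw [hu'] at h
  have := h.comp_hasDerivAt z hA
  have hinv : Ring.inverse (A z) = ((u⁻¹ : (Matrix (Fin R) (Fin R) ℂ)ˣ) : Matrix (Fin R) (Fin R) ℂ) := by
    rw [← hu', Ring.inverse_unit]
  rw [funext fun w => Matrix.nonsing_inv_eq_ringInverse (A w), Matrix.nonsing_inv_eq_ringInverse, hinv]
  exact this

lemma hasDerivAt_matrix_trace {A : ℂ → Matrix (Fin R) (Fin R) ℂ} {A' : Matrix (Fin R) (Fin R) ℂ}
    {z : ℂ} (hA : HasDerivAt A A' z) : HasDerivAt (fun w => (A w).trace) A'.trace z :=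
  (Matrix.traceLinearMap (Fin R) ℂ ℂ).toContinuousLinearMap.hasFDerivAt.comp_hasDerivAt z hA

lemma isUnit_det_one_add_smul {a : ℂ} (ha : ‖a‖ < 1) (θ : Matrix.unitaryGroup (Fin R) ℂ) :
    IsUnit (1 + a • (θ : Matrix (Fin R) (Fin R) ℂ)).det := by
  rw [← Matrix.isUnit_iff_isUnit_det]
  have : ‖(-a) • (θ : Matrix (Fin R) (Fin R) ℂ)‖ < 1 := by
    rw [norm_smul, norm_neg]
    have h1 := norm_le_one_of_mem_unitary θ.2
    nlinarith [norm_nonneg a, norm_nonneg (θ : Matrix (Fin R) (Fin R) ℂ)]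
  simpa using isUnit_one_sub_of_norm_lt_one this

lemma Continuous.integrable_unitaryGroup (μ : Measure (Matrix.unitaryGroup (Fin R) ℂ))
    [IsFiniteMeasure μ] {f : Matrix.unitaryGroup (Fin R) ℂ → ℂ} (hf : Continuous f) :
    Integrable f μ :=
  hf.integrable_of_hasCompactSupport (HasCompactSupport.of_compactSpace f)

/-- The integral of a derivative along a left-translation flow vanishes. -/
lemma integral_leftDeriv_eq_zero (μ : Measure (Matrix.unitaryGroup (Fin R) ℂ))
    [μ.IsHaarMeasure] [IsProbabilityMeasure μ] {X : Matrix (Fin R) (Fin R) ℂ}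
    (hX : X ∈ skewAdjoint (Matrix (Fin R) (Fin R) ℂ))
    {f : Matrix (Fin R) (Fin R) ℂ → ℂ} {g : Matrix.unitaryGroup (Fin R) ℂ → ℂ}
    (hf : Continuous fun θ : Matrix.unitaryGroup (Fin R) ℂ => f θ) (hg : Continuous g)
    (hfg : ∀ θ : Matrix.unitaryGroup (Fin R) ℂ,
      HasDerivAt (fun z : ℂ => f (NormedSpace.exp (z • X) * (θ : Matrix (Fin R) (Fin R) ℂ))) (g θ) 0) :
    ∫ θ, g θ ∂μ = 0 := by
  let : NormedAlgebra ℚ (Matrix (Fin R) (Fin R) ℂ) := NormedAlgebra.restrictScalars ℚ ℂ _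
  have hmem (t : ℝ) : NormedSpace.exp ((t : ℂ) • X) ∈ Matrix.unitaryGroup (Fin R) ℂ := by
    refine NormedSpace.exp_mem_unitary_of_mem_skewAdjoint ?_
    rw [skewAdjoint.mem_iff] at hX ⊢
    rw [star_smul, hX]
    simp
  let u : ℝ → Matrix.unitaryGroup (Fin R) ℂ := fun t => ⟨_, hmem t⟩
  have hder (θ : Matrix.unitaryGroup (Fin R) ℂ) (t : ℝ) :
      HasDerivAt (fun s : ℝ => f ((u s * θ : Matrix.unitaryGroup (Fin R) ℂ) : Matrix (Fin R) (Fin R) ℂ)) (g (u t * θ)) t := by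
    have h0 : HasDerivAt (fun z : ℂ => f (NormedSpace.exp (z • X) *
        ((u t * θ : Matrix.unitaryGroup (Fin R) ℂ) : Matrix (Fin R) (Fin R) ℂ))) (g (u t * θ)) ((t : ℂ) - t) := by
      simpa using hfg (u t * θ)
    have h1 := (h0.comp_sub_const (t : ℂ) (t : ℂ)).comp_ofReal
    convert h1 using 2 with s
    have hc : Commute (((s : ℂ) - t) • X) ((t : ℂ) • X) := (Commute.refl X).smul_left _ |>.smul_right _
    have := NormedSpace.exp_add_of_commute hc
    rw [← add_smul, sub_add_cancel] at this
    simp only [u, Submonoid.coe_mul, this, mul_assoc]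
  obtain ⟨K, hK⟩ := (isCompact_univ (X := Matrix.unitaryGroup (Fin R) ℂ)).exists_bound_of_continuousOn
    hg.continuousOn
  have hmul (t : ℝ) : Continuous fun θ : Matrix.unitaryGroup (Fin R) ℂ => u t * θ :=
    continuous_const.mul continuous_id
  have key := (hasDerivAt_integral_of_dominated_loc_of_deriv_le (μ := μ) (𝕜 := ℝ) (x₀ := 0)
    (F := fun t θ => f ((u t * θ : Matrix.unitaryGroup (Fin R) ℂ) : Matrix (Fin R) (Fin R) ℂ))
    (F' := fun t θ => g (u t * θ)) (bound := fun _ => K) Filter.univ_mem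
    (Filter.Eventually.of_forall fun t => (hf.comp (hmul t)).aestronglyMeasurable)
    ((hf.comp (hmul 0)).integrable_unitaryGroup μ)
    (hg.comp (hmul 0)).aestronglyMeasurable
    (Filter.Eventually.of_forall fun θ t _ => hK _ (Set.mem_univ _))
    (integrable_const K)
    (Filter.Eventually.of_forall fun θ t _ => hder θ t)).2
  have hconst : (fun t : ℝ => ∫ θ, f ((u t * θ : Matrix.unitaryGroup (Fin R) ℂ) : Matrix (Fin R) (Fin R) ℂ) ∂μ) =
      fun _ => ∫ θ : Matrix.unitaryGroup (Fin R) ℂ, f θ ∂μ := by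
    ext t
    exact integral_mul_left_eq_self (fun θ : Matrix.unitaryGroup (Fin R) ℂ => f θ) (u t)
  rw [hconst] at key
  have h0 := key.unique (hasDerivAt_const (0 : ℝ) _)
  rwa [integral_mul_left_eq_self g (u 0)] at h0

end UnitaryCalculus

section Casimir

open Matrix
open scoped Matrix.Norms.L2Operator

variable {R : ℕ}

/-- The matrix `1 - (1 + aA)⁻¹ = aA(1 + aA)⁻¹`. -/
noncomputable def cayleyResolvent (a : ℂ) (A : Matrix (Fin R) (Fin R) ℂ) :
    Matrix (Fin R) (Fin R) ℂ := 1 - (1 + a • A)⁻¹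

lemma inv_mul_smul_eq_cayleyResolvent {a : ℂ} {A : Matrix (Fin R) (Fin R) ℂ}
    (h : IsUnit (1 + a • A).det) : (1 + a • A)⁻¹ * (a • A) = cayleyResolvent a A := by
  have := Matrix.nonsing_inv_mul _ h
  rw [mul_add, mul_one] at this
  exact eq_sub_of_add_eq' this

lemma smul_mul_inv_eq_cayleyResolvent {a : ℂ} {A : Matrix (Fin R) (Fin R) ℂ}
    (h : IsUnit (1 + a • A).det) : (a • A) * (1 + a • A)⁻¹ = cayleyResolvent a A := by
  have := Matrix.mul_nonsing_inv _ h
  rw [add_mul, one_mul] at this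
  exact eq_sub_of_add_eq' this

lemma hasDerivAt_det_one_add_smul_flow {a : ℂ} {A X : Matrix (Fin R) (Fin R) ℂ}
    {γ : ℂ → Matrix (Fin R) (Fin R) ℂ} (hγ : HasDerivAt γ (X * A) 0) (hγ0 : γ 0 = A)
    (h : IsUnit (1 + a • A).det) :
    HasDerivAt (fun z => (1 + a • γ z).det)
      ((1 + a • A).det * (cayleyResolvent a A * X).trace) 0 := by
  have h1 : HasDerivAt (fun z => 1 + a • γ z) (a • (X * A)) 0 := (hγ.const_smul a).const_add 1
  have h2 := hasDerivAt_matrix_det h1 (by rwa [hγ0])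
  refine h2.congr_deriv ?_
  simp only [hγ0]
  rw [Matrix.trace_mul_comm, ← mul_smul_comm, mul_assoc, smul_mul_inv_eq_cayleyResolvent h,
    Matrix.trace_mul_comm]

lemma hasDerivAt_cayleyResolvent_flow {a : ℂ} {A X : Matrix (Fin R) (Fin R) ℂ}
    {γ : ℂ → Matrix (Fin R) (Fin R) ℂ} (hγ : HasDerivAt γ (X * A) 0) (hγ0 : γ 0 = A)
    (h : IsUnit (1 + a • A).det) :
    HasDerivAt (fun z => cayleyResolvent a (γ z))
      ((1 - cayleyResolvent a A) * X * cayleyResolvent a A) 0 := by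
  have h1 : HasDerivAt (fun z => 1 + a • γ z) (a • (X * A)) 0 := (hγ.const_smul a).const_add 1
  have h2 := (hasDerivAt_matrix_inv h1 (by rwa [hγ0])).const_sub 1
  refine h2.congr_deriv ?_
  simp only [hγ0, neg_neg]
  rw [← mul_smul_comm, mul_assoc, mul_assoc, smul_mul_inv_eq_cayleyResolvent h, ← mul_assoc]
  simp [cayleyResolvent]

/-- The integrand `det(A)⁻ᵏ ∏ᵢ det(1 + aᵢ A)`. -/
noncomputable def charProduct {ι : Type*} [Fintype ι] (k : ℕ) (a : ι → ℂ)
    (A : Matrix (Fin R) (Fin R) ℂ) : ℂ := (A.det)⁻¹ ^ k * ∏ i, (1 + a i • A).det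

/-- The matrix `∑ᵢ aᵢA(1 + aᵢA)⁻¹ - k`, the logarithmic derivative of `charProduct`. -/
noncomputable def logDerivMatrix {ι : Type*} [Fintype ι] (k : ℕ) (a : ι → ℂ)
    (A : Matrix (Fin R) (Fin R) ℂ) : Matrix (Fin R) (Fin R) ℂ :=
  ∑ i, cayleyResolvent (a i) A - (k : ℂ) • 1

variable {ι : Type*} [Fintype ι]

lemma hasDerivAt_charProduct_flow (k : ℕ) {a : ι → ℂ} {A X : Matrix (Fin R) (Fin R) ℂ}
    {γ : ℂ → Matrix (Fin R) (Fin R) ℂ} (hγ : HasDerivAt γ (X * A) 0) (hγ0 : γ 0 = A)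
    (hA : IsUnit A.det) (h : ∀ i, IsUnit (1 + a i • A).det) :
    HasDerivAt (fun z => charProduct k a (γ z))
      (charProduct k a A * (logDerivMatrix k a A * X).trace) 0 := by
  classical
  have hd : HasDerivAt (fun z => (γ z).det) (A.det * X.trace) 0 := by
    refine (hasDerivAt_matrix_det hγ (by rwa [hγ0])).congr_deriv ?_
    rw [hγ0, Matrix.trace_mul_comm, mul_assoc, Matrix.mul_nonsing_inv _ hA, mul_one]
  have hdi : HasDerivAt (fun z => (γ z).det⁻¹ ^ k) (-(k : ℂ) * X.trace * A.det⁻¹ ^ k) 0 := by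
    have hne : (γ 0).det ≠ 0 := by rw [hγ0]; exact hA.ne_zero
    refine ((hd.fun_inv hne).fun_pow k).congr_deriv ?_
    have hne' := hA.ne_zero
    rw [hγ0]
    rcases k with _ | k
    · simp
    · rw [Nat.add_sub_cancel, pow_succ]
      field_simp
      rw [pow_succ]
      field_simp
  have hp := HasDerivAt.fun_finsetProd (u := Finset.univ) (x := (0 : ℂ))
    (f := fun i z => (1 + a i • γ z).det)
    (fun i _ => hasDerivAt_det_one_add_smul_flow hγ hγ0 (h i))
  refine (hdi.mul hp).congr_deriv ?_
  simp only [hγ0, smul_eq_mul]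
  have : ∀ i, (∏ j ∈ Finset.univ.erase i, (1 + a j • A).det) *
      ((1 + a i • A).det * (cayleyResolvent (a i) A * X).trace) =
      (∏ j, (1 + a j • A).det) * (cayleyResolvent (a i) A * X).trace := fun i => by
    rw [← Finset.mul_prod_erase Finset.univ _ (Finset.mem_univ i)]
    ring
  simp only [this, ← Finset.mul_sum]
  simp only [charProduct, logDerivMatrix, sub_mul, Matrix.trace_sub, Finset.sum_mul,
    Matrix.trace_sum, Matrix.smul_mul, one_mul, Matrix.trace_smul, smul_eq_mul]
  ring

lemma continuous_cayleyResolvent {a : ℂ} (ha : ‖a‖ < 1) :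
    Continuous fun θ : Matrix.unitaryGroup (Fin R) ℂ =>
      cayleyResolvent a (θ : Matrix (Fin R) (Fin R) ℂ) := by
  have hc : Continuous fun θ : Matrix.unitaryGroup (Fin R) ℂ =>
      1 + a • (θ : Matrix (Fin R) (Fin R) ℂ) := by fun_prop
  unfold cayleyResolvent
  simp only [Matrix.inv_def, Ring.inverse_eq_inv']
  refine continuous_const.sub (Continuous.smul (hc.matrix_det.inv₀ fun θ => ?_)
    hc.matrix_adjugate)
  exact (isUnit_det_one_add_smul ha θ).ne_zero

lemma isUnit_det_unitary (θ : Matrix.unitaryGroup (Fin R) ℂ) :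
    IsUnit (θ : Matrix (Fin R) (Fin R) ℂ).det :=
  (Matrix.isUnit_iff_isUnit_det _).mp ⟨Unitary.toUnits θ, rfl⟩

lemma continuous_charProduct (k : ℕ) (a : ι → ℂ) :
    Continuous fun θ : Matrix.unitaryGroup (Fin R) ℂ =>
      charProduct k a (θ : Matrix (Fin R) (Fin R) ℂ) := by
  have h0 : Continuous fun θ : Matrix.unitaryGroup (Fin R) ℂ =>
      ((θ : Matrix (Fin R) (Fin R) ℂ).det)⁻¹ :=
    continuous_subtype_val.matrix_det.inv₀ fun θ => (isUnit_det_unitary θ).ne_zero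
  have h1 (i : ι) : Continuous fun θ : Matrix.unitaryGroup (Fin R) ℂ =>
      (1 + a i • (θ : Matrix (Fin R) (Fin R) ℂ)).det :=
    Continuous.matrix_det (by fun_prop)
  exact (h0.pow k).mul (continuous_finsetProd _ fun i _ => h1 i)

lemma continuous_logDerivMatrix (k : ℕ) {a : ι → ℂ} (ha : ∀ i, ‖a i‖ < 1) :
    Continuous fun θ : Matrix.unitaryGroup (Fin R) ℂ =>
      logDerivMatrix k a (θ : Matrix (Fin R) (Fin R) ℂ) :=
  (continuous_finsetSum _ fun i _ => continuous_cayleyResolvent (ha i)).sub continuous_const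

/-- The second derivative of `charProduct` in the directions `X` and `Y`. -/
noncomputable def secondLeftDeriv (k : ℕ) (a : ι → ℂ) (X Y A : Matrix (Fin R) (Fin R) ℂ) : ℂ :=
  charProduct k a A * ((logDerivMatrix k a A * X).trace * (logDerivMatrix k a A * Y).trace +
    ∑ i, ((1 - cayleyResolvent (a i) A) * X * cayleyResolvent (a i) A * Y).trace)

lemma continuous_secondLeftDeriv (k : ℕ) {a : ι → ℂ} (ha : ∀ i, ‖a i‖ < 1)
    (X Y : Matrix (Fin R) (Fin R) ℂ) :
    Continuous fun θ : Matrix.unitaryGroup (Fin R) ℂ =>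
      secondLeftDeriv k a X Y (θ : Matrix (Fin R) (Fin R) ℂ) := by
  have h1 := continuous_charProduct (R := R) k a
  have h2 := continuous_logDerivMatrix (R := R) k ha
  have h3 := fun i => continuous_cayleyResolvent (R := R) (ha i)
  refine h1.mul (((h2.mul continuous_const).matrix_trace.mul
    (h2.mul continuous_const).matrix_trace).add (continuous_finsetSum _ fun i _ => ?_))
  exact ((((continuous_const.sub (h3 i)).mul continuous_const).mul (h3 i)).mul
    continuous_const).matrix_trace

variable (μ : Measure (Matrix.unitaryGroup (Fin R) ℂ)) [μ.IsHaarMeasure] [IsProbabilityMeasure μ]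

lemma integral_secondLeftDeriv_of_skewAdjoint (k : ℕ) {a : ι → ℂ} (ha : ∀ i, ‖a i‖ < 1)
    {X : Matrix (Fin R) (Fin R) ℂ} (hX : X ∈ skewAdjoint (Matrix (Fin R) (Fin R) ℂ))
    (Y : Matrix (Fin R) (Fin R) ℂ) :
    ∫ θ, secondLeftDeriv k a X Y (θ : Matrix (Fin R) (Fin R) ℂ) ∂μ = 0 := by
  refine integral_leftDeriv_eq_zero μ hX
    (f := fun A => charProduct k a A * (logDerivMatrix k a A * Y).trace)
    ((continuous_charProduct k a).mul
      ((continuous_logDerivMatrix k ha).mul continuous_const).matrix_trace)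
    (continuous_secondLeftDeriv k ha X Y) fun (θ : Matrix.unitaryGroup (Fin R) ℂ) => ?_
  set A : Matrix (Fin R) (Fin R) ℂ := (θ : Matrix (Fin R) (Fin R) ℂ) with hAdef
  have hγ : HasDerivAt (fun z : ℂ => NormedSpace.exp (z • X) * A) (X * A) 0 := by
    simpa using (hasDerivAt_exp_smul_const (𝕂 := ℂ) X 0).mul_const A
  have hγ0 : NormedSpace.exp ((0 : ℂ) • X) * A = A := by simp
  have hu := fun i => isUnit_det_one_add_smul (ha i) θ
  have h1 := hasDerivAt_charProduct_flow k hγ hγ0 (isUnit_det_unitary θ) hu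
  have h2 : HasDerivAt (fun z : ℂ => logDerivMatrix k a (NormedSpace.exp (z • X) * A))
      (∑ i, (1 - cayleyResolvent (a i) A) * X * cayleyResolvent (a i) A) 0 :=
    (HasDerivAt.fun_sum fun i _ => hasDerivAt_cayleyResolvent_flow hγ hγ0 (hu i)).sub_const _
  refine (h1.mul (hasDerivAt_matrix_trace (h2.mul_const Y))).congr_deriv ?_
  simp only [hγ0, secondLeftDeriv, Finset.sum_mul, Matrix.trace_sum]
  ring

lemma integral_secondLeftDeriv (k : ℕ) {a : ι → ℂ} (ha : ∀ i, ‖a i‖ < 1)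
    (X Y : Matrix (Fin R) (Fin R) ℂ) :
    ∫ θ, secondLeftDeriv k a X Y (θ : Matrix (Fin R) (Fin R) ℂ) ∂μ = 0 := by
  have hdecomp (A : Matrix (Fin R) (Fin R) ℂ) : secondLeftDeriv k a X Y A =
      (1 / 2 : ℂ) * secondLeftDeriv k a (X - star X) Y A +
      (-Complex.I / 2) * secondLeftDeriv k a (Complex.I • (X + star X)) Y A := by
    simp only [secondLeftDeriv, mul_sub, sub_mul, mul_add, add_mul, Matrix.trace_sub,
      Matrix.trace_add, Matrix.mul_smul, Matrix.smul_mul, Matrix.trace_smul, smul_eq_mul,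
      Finset.sum_add_distrib, Finset.sum_sub_distrib, ← Finset.mul_sum]
    linear_combination (norm := (ring_nf; try simp only [Complex.I_sq]; ring_nf))
  have h1 : X - star X ∈ skewAdjoint (Matrix (Fin R) (Fin R) ℂ) := by
    rw [skewAdjoint.mem_iff]; simp
  have h2 : Complex.I • (X + star X) ∈ skewAdjoint (Matrix (Fin R) (Fin R) ℂ) := by
    rw [skewAdjoint.mem_iff, star_smul]; simp [add_comm]
  simp only [hdecomp]
  rw [integral_add (((continuous_secondLeftDeriv k ha _ Y).integrable_unitaryGroup μ).const_mul _)
    (((continuous_secondLeftDeriv k ha _ Y).integrable_unitaryGroup μ).const_mul _),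
    integral_const_mul, integral_const_mul,
    integral_secondLeftDeriv_of_skewAdjoint μ k ha h1, integral_secondLeftDeriv_of_skewAdjoint μ k ha h2]
  simp

/-- The Casimir operator applied to `charProduct` integrates to zero. -/
lemma integral_casimir_charProduct (k : ℕ) {a : ι → ℂ} (ha : ∀ i, ‖a i‖ < 1) :
    ∫ θ : Matrix.unitaryGroup (Fin R) ℂ, charProduct k a (θ : Matrix (Fin R) (Fin R) ℂ) *
      ((logDerivMatrix k a (θ : Matrix (Fin R) (Fin R) ℂ) *
          logDerivMatrix k a (θ : Matrix (Fin R) (Fin R) ℂ)).trace +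
        ∑ i, (R - (cayleyResolvent (a i) (θ : Matrix (Fin R) (Fin R) ℂ)).trace) *
          (cayleyResolvent (a i) (θ : Matrix (Fin R) (Fin R) ℂ)).trace) ∂μ = 0 := by
  have hts (A : Matrix (Fin R) (Fin R) ℂ) (p q : Fin R) :
      (A * Matrix.single p q 1).trace = A q p := by
    simp [Matrix.trace, Matrix.mul_apply, Matrix.single_apply, ite_and]
  have hsum (A : Matrix (Fin R) (Fin R) ℂ) : charProduct k a A *
      ((logDerivMatrix k a A * logDerivMatrix k a A).trace +
        ∑ i, (R - (cayleyResolvent (a i) A).trace) * (cayleyResolvent (a i) A).trace) =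
      ∑ p, ∑ q, secondLeftDeriv k a (Matrix.single p q 1) (Matrix.single q p 1) A := by
    simp only [secondLeftDeriv, ← Finset.mul_sum, Finset.sum_add_distrib]
    congr 2
    · simp only [hts]
      simp only [Matrix.trace, Matrix.diag_apply, Matrix.mul_apply]
      exact Finset.sum_congr rfl fun p _ => Finset.sum_congr rfl fun q _ => mul_comm _ _
    · have hi (i : ι) : (R - (cayleyResolvent (a i) A).trace) * (cayleyResolvent (a i) A).trace =
          ∑ p, ∑ q, ((1 - cayleyResolvent (a i) A) * Matrix.single p q 1 *
            cayleyResolvent (a i) A * Matrix.single q p 1).trace := by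
        have he (p q : Fin R) : ((1 - cayleyResolvent (a i) A) * Matrix.single p q 1 *
            cayleyResolvent (a i) A : Matrix (Fin R) (Fin R) ℂ) p q =
            (1 - cayleyResolvent (a i) A) p p * cayleyResolvent (a i) A q q := by
          simp [Matrix.mul_apply, Matrix.single_apply, ite_and]
        simp only [hts, he, ← Finset.mul_sum, ← Finset.sum_mul]
        simp [Matrix.trace]
      simp only [hi]
      rw [Finset.sum_comm]
      exact Finset.sum_congr rfl fun p _ => Finset.sum_comm
  simp only [hsum]
  rw [integral_finsetSum _ fun p _ => integrable_finsetSum _ fun q _ =>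
    (continuous_secondLeftDeriv k ha _ _).integrable_unitaryGroup μ]
  refine Finset.sum_eq_zero fun p _ => ?_
  rw [integral_finsetSum _ fun q _ =>
    (continuous_secondLeftDeriv k ha _ _).integrable_unitaryGroup μ]
  exact Finset.sum_eq_zero fun q _ => integral_secondLeftDeriv μ k ha _ _

end Casimir

section OneVariable

open Matrix
open scoped Matrix.Norms.L2Operator

variable {R : ℕ}

/-- The polynomial `det(1 + X A)`. -/
noncomputable def revCharpoly (A : Matrix (Fin R) (Fin R) ℂ) : ℂ[X] :=
  (1 + (X : ℂ[X]) • A.map C).det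

lemma eval_revCharpoly (A : Matrix (Fin R) (Fin R) ℂ) (a : ℂ) :
    (revCharpoly A).eval a = (1 + a • A).det := by
  rw [revCharpoly, ← Polynomial.coe_evalRingHom, RingHom.map_det]
  congr 1
  ext i j
  simp [Matrix.one_apply, apply_ite]
  exact mul_comm _ _

lemma eval_derivative_revCharpoly {A : Matrix (Fin R) (Fin R) ℂ} {a : ℂ}
    (h : IsUnit (1 + a • A).det) :
    (revCharpoly A).derivative.eval a =
      (revCharpoly A).eval a * ((1 + a • A)⁻¹ * A).trace := by
  have hc : HasDerivAt (fun z : ℂ => 1 + z • A) A a := by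
    simpa using ((hasDerivAt_id a).smul_const A).const_add 1
  have h1 := hasDerivAt_matrix_det hc h
  have h2 := (revCharpoly A).hasDerivAt a
  rw [funext (eval_revCharpoly A)] at h2
  rw [eval_revCharpoly]
  exact h2.unique h1

lemma mul_eval_derivative_revCharpoly {A : Matrix (Fin R) (Fin R) ℂ} {a : ℂ}
    (h : IsUnit (1 + a • A).det) :
    a * (revCharpoly A).derivative.eval a =
      (revCharpoly A).eval a * (cayleyResolvent a A).trace := by
  rw [eval_derivative_revCharpoly h, ← inv_mul_smul_eq_cayleyResolvent h, Matrix.mul_smul,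
    Matrix.trace_smul, smul_eq_mul]
  ring

lemma sq_mul_eval_derivative_derivative_revCharpoly {A : Matrix (Fin R) (Fin R) ℂ} {a : ℂ}
    (h : IsUnit (1 + a • A).det) :
    a ^ 2 * (revCharpoly A).derivative.derivative.eval a =
      (revCharpoly A).eval a * ((cayleyResolvent a A).trace ^ 2 -
        (cayleyResolvent a A * cayleyResolvent a A).trace) := by
  have hc : HasDerivAt (fun z : ℂ => 1 + z • A) A a := by
    simpa using ((hasDerivAt_id a).smul_const A).const_add 1
  have hev : ∀ᶠ z in nhds a, IsUnit (1 + z • A).det := by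
    have hcont : Continuous fun z : ℂ => (1 + z • A).det := by
      rw [← funext (eval_revCharpoly A)]
      exact (revCharpoly A).continuous
    filter_upwards [hcont.continuousAt.eventually_ne h.ne_zero] with z hz
    exact hz.isUnit
  have h1 := ((revCharpoly A).hasDerivAt a).mul
    (hasDerivAt_matrix_trace ((hasDerivAt_matrix_inv hc h).mul_const A))
  have h2 : HasDerivAt (fun z => (revCharpoly A).derivative.eval z) _ a :=
    h1.congr_of_eventuallyEq (by
      filter_upwards [hev] with z hz
      exact eval_derivative_revCharpoly hz)
  rw [(((revCharpoly A).derivative).hasDerivAt a).unique h2, eval_derivative_revCharpoly h,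
    ← inv_mul_smul_eq_cayleyResolvent h]
  simp only [Matrix.mul_smul, Matrix.smul_mul, Matrix.trace_smul, smul_eq_mul, Matrix.neg_mul,
    Matrix.trace_neg, mul_assoc]
  ring

lemma sub_mul_trace_cayleyResolvent_mul {A : Matrix (Fin R) (Fin R) ℂ} {a b : ℂ}
    (ha : IsUnit (1 + a • A).det) (hb : IsUnit (1 + b • A).det) :
    (b - a) * (cayleyResolvent a A * cayleyResolvent b A).trace =
      b * (cayleyResolvent a A).trace - a * (cayleyResolvent b A).trace := by
  have key : b • cayleyResolvent a A - a • cayleyResolvent b A =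
      (b - a) • (cayleyResolvent a A * cayleyResolvent b A) := by
    have h1 : cayleyResolvent a A = (1 + a • A)⁻¹ * (a • A) * ((1 + b • A) * (1 + b • A)⁻¹) := by
      rw [inv_mul_smul_eq_cayleyResolvent ha, Matrix.mul_nonsing_inv _ hb, mul_one]
    have h2 : cayleyResolvent b A = (1 + a • A)⁻¹ * (1 + a • A) * ((b • A) * (1 + b • A)⁻¹) := by
      rw [smul_mul_inv_eq_cayleyResolvent hb, Matrix.nonsing_inv_mul _ ha, one_mul]
    have h3 : cayleyResolvent a A * cayleyResolvent b A =
        (1 + a • A)⁻¹ * ((a • A) * (b • A)) * (1 + b • A)⁻¹ := by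
      rw [← inv_mul_smul_eq_cayleyResolvent ha, ← smul_mul_inv_eq_cayleyResolvent hb]
      simp only [mul_assoc]
    have h1' : cayleyResolvent a A = (1 + a • A)⁻¹ * ((a • A) * (1 + b • A)) * (1 + b • A)⁻¹ := by
      rw [h1]; simp only [mul_assoc]
    have h2' : cayleyResolvent b A = (1 + a • A)⁻¹ * ((1 + a • A) * (b • A)) * (1 + b • A)⁻¹ := by
      rw [h2]; simp only [mul_assoc]
    have hlin (P Q S T : Matrix (Fin R) (Fin R) ℂ) :
        b • (P * S * Q) - a • (P * T * Q) = P * (b • S - a • T) * Q := by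
      simp only [mul_sub, sub_mul, mul_smul_comm, smul_mul_assoc]
    have hsc (P Q S : Matrix (Fin R) (Fin R) ℂ) :
        (b - a) • (P * S * Q) = P * ((b - a) • S) * Q := by
      simp only [mul_smul_comm, smul_mul_assoc]
    rw [h3, h1', h2', hlin, hsc]
    congr 2
    simp only [mul_add, add_mul, Matrix.smul_mul, Matrix.mul_smul, mul_one, one_mul, smul_add,
      smul_smul]
    module
  have := congrArg Matrix.trace key
  simpa [Matrix.trace_sub, Matrix.trace_smul] using this.symm

lemma trace_logDerivMatrix_sq {ι : Type*} [Fintype ι] (k : ℕ) (a : ι → ℂ)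
    (A : Matrix (Fin R) (Fin R) ℂ) :
    (logDerivMatrix k a A * logDerivMatrix k a A).trace =
      ∑ i, ∑ j, (cayleyResolvent (a i) A * cayleyResolvent (a j) A).trace -
        2 * k * ∑ i, (cayleyResolvent (a i) A).trace + k ^ 2 * R := by
  simp only [logDerivMatrix, sub_mul, mul_sub, Matrix.trace_sub, Finset.sum_mul, Finset.mul_sum,
    Matrix.trace_sum, Matrix.smul_mul, Matrix.mul_smul, one_mul, mul_one, Matrix.trace_smul,
    Matrix.trace_one, smul_eq_mul, Fintype.card_fin]
  rw [Finset.sum_comm]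
  simp only [mul_assoc, Finset.sum_sub_distrib, ← Finset.mul_sum]
  ring

end OneVariable

section Alternant

open Matrix

/-- The determinant of the coefficients `[X^{mᵢ}] Xʲ d`, i.e. the coefficient of `a^m` in the
product of the Vandermonde determinant of `a` with `∏ᵢ d(aᵢ)`. -/
noncomputable def alternantCoeff {N : ℕ} (d : ℂ[X]) (m : Fin N → ℕ) : ℂ :=
  (Matrix.of fun j i : Fin N => (X ^ (j : ℕ) * d).coeff (m i)).det

lemma sum_coeff_mul_pow_weighted (p : ℂ[X]) {n : ℕ} (hp : p.natDegree < n) (c a : ℂ) :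
    ∑ r : Fin n, ((r : ℂ) ^ 2 - c * r) * (p.coeff r * a ^ (r : ℕ)) =
      a ^ 2 * p.derivative.derivative.eval a + (1 - c) * (a * p.derivative.eval a) := by
  rw [Fin.sum_univ_eq_sum_range (fun r => ((r : ℂ) ^ 2 - c * r) * (p.coeff r * a ^ r))]
  conv_rhs => rw [p.as_sum_range' n hp]
  simp only [derivative_sum, eval_finsetSum, Finset.mul_sum, ← Finset.sum_add_distrib]
  refine Finset.sum_congr rfl fun r _ => ?_
  rcases r with _ | _ | r
  · simp
  · simp [mul_comm]
  · simp
    ring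

lemma vandermonde_alternating_sum {N : ℕ} (a : Fin N → ℂ) :
    ∑ σ : Equiv.Perm (Fin N), ((Equiv.Perm.sign σ : ℤ) : ℂ) * ∏ i, a i ^ (σ i : ℕ) =
      ∏ i, ∏ j ∈ Finset.Ioi i, (a j - a i) := by
  rw [← Matrix.det_vandermonde, ← Matrix.det_transpose, Matrix.det_apply']
  rfl

/-- Differentiating the Vandermonde determinant in the direction `(aᵢ tᵢ)ᵢ`. -/
lemma vandermonde_directional_deriv {N : ℕ} {a : Fin N → ℂ} (ha : Function.Injective a)
    (t : Fin N → ℂ) :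
    ∑ σ : Equiv.Perm (Fin N), ((Equiv.Perm.sign σ : ℤ) : ℂ) *
        ((∏ i, a i ^ (σ i : ℕ)) * ∑ i, (σ i : ℂ) * t i) =
      (∏ i, ∏ j ∈ Finset.Ioi i, (a j - a i)) *
        ∑ i, ∑ j ∈ Finset.Ioi i, (a j * t j - a i * t i) / (a j - a i) := by
  have hlin (i : Fin N) : HasDerivAt (fun z : ℂ => a i + z * (a i * t i)) (a i * t i) 0 := by
    simpa using ((hasDerivAt_id (0 : ℂ)).mul_const (a i * t i)).const_add (a i)
  have h1 : HasDerivAt (fun z : ℂ => ∑ σ : Equiv.Perm (Fin N), ((Equiv.Perm.sign σ : ℤ) : ℂ) *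
      ∏ i, (a i + z * (a i * t i)) ^ (σ i : ℕ))
      (∑ σ : Equiv.Perm (Fin N), ((Equiv.Perm.sign σ : ℤ) : ℂ) *
        ((∏ i, a i ^ (σ i : ℕ)) * ∑ i, (σ i : ℂ) * t i)) 0 := by
    refine HasDerivAt.fun_sum fun σ _ => HasDerivAt.const_mul _ ?_
    refine (HasDerivAt.fun_finsetProd (u := Finset.univ)
      fun i _ => (hlin i).fun_pow (σ i : ℕ)).congr_deriv ?_
    rw [Finset.mul_sum]
    refine Finset.sum_congr rfl fun i _ => ?_
    rw [← Finset.mul_prod_erase Finset.univ _ (Finset.mem_univ i)]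
    simp only [zero_mul, add_zero, smul_eq_mul]
    rcases hs : (σ i : ℕ) with _ | s
    · simp
    · simp only [Nat.add_sub_cancel, pow_succ]
      ring
  have h2 : HasDerivAt (fun z : ℂ => ∏ i, ∏ j ∈ Finset.Ioi i,
      ((a j + z * (a j * t j)) - (a i + z * (a i * t i))))
      ((∏ i, ∏ j ∈ Finset.Ioi i, (a j - a i)) *
        ∑ i, ∑ j ∈ Finset.Ioi i, (a j * t j - a i * t i) / (a j - a i)) 0 := by
    have hin (i : Fin N) : HasDerivAt (fun z : ℂ => ∏ j ∈ Finset.Ioi i,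
        ((a j + z * (a j * t j)) - (a i + z * (a i * t i))))
        ((∏ j ∈ Finset.Ioi i, (a j - a i)) *
          ∑ j ∈ Finset.Ioi i, (a j * t j - a i * t i) / (a j - a i)) 0 := by
      refine (HasDerivAt.fun_finsetProd (u := Finset.Ioi i)
        fun j _ => (hlin j).sub (hlin i)).congr_deriv ?_
      rw [Finset.mul_sum]
      refine Finset.sum_congr rfl fun j hj => ?_
      rw [← Finset.mul_prod_erase (Finset.Ioi i) _ hj]
      have hne : a j - a i ≠ 0 := sub_ne_zero.mpr fun h =>
        (Finset.mem_Ioi.mp hj).ne' (ha h)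
      simp only [zero_mul, add_zero, smul_eq_mul, Pi.sub_apply]
      field_simp
    refine (HasDerivAt.fun_finsetProd (u := Finset.univ) fun i _ => hin i).congr_deriv ?_
    rw [Finset.mul_sum]
    refine Finset.sum_congr rfl fun i _ => ?_
    rw [← Finset.mul_prod_erase Finset.univ _ (Finset.mem_univ i)]
    simp only [zero_mul, add_zero, smul_eq_mul]
    ring
  have heq := funext fun z : ℂ => vandermonde_alternating_sum fun i => a i + z * (a i * t i)
  rw [heq] at h1
  exact h1.unique h2

lemma natDegree_X_pow_mul_lt {N R : ℕ} {d : ℂ[X]} (hd : d.natDegree ≤ R) (j : Fin N) :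
    (X ^ (j : ℕ) * d).natDegree < R + N := by
  have := natDegree_mul_le (p := (X : ℂ[X]) ^ (j : ℕ)) (q := d)
  rw [natDegree_X_pow] at this
  omega

lemma sum_prod_pi {N n : ℕ} (f : Fin N → Fin n → ℂ) :
    ∑ m : Fin N → Fin n, ∏ i, f i (m i) = ∏ i, ∑ r, f i r := by
  rw [Finset.prod_univ_sum, Fintype.piFinset_univ]

lemma sum_coeff_X_pow_mul {N R : ℕ} {d : ℂ[X]} (hd : d.natDegree ≤ R) (j : Fin N) (a : ℂ) :
    ∑ r : Fin (R + N), (X ^ (j : ℕ) * d).coeff (r : ℕ) * a ^ (r : ℕ) =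
      a ^ (j : ℕ) * d.eval a := by
  rw [Fin.sum_univ_eq_sum_range fun r : ℕ => ((X : ℂ[X]) ^ (j : ℕ) * d).coeff r * a ^ r,
    ← eval_eq_sum_range' (natDegree_X_pow_mul_lt hd j)]
  simp

lemma sum_alternantCoeff {N R : ℕ} {d : ℂ[X]} (hd : d.natDegree ≤ R) (a : Fin N → ℂ) :
    ∑ m : Fin N → Fin (R + N), alternantCoeff d (fun i => m i) * ∏ i, a i ^ (m i : ℕ) =
      (∏ i, ∏ j ∈ Finset.Ioi i, (a j - a i)) * ∏ i, d.eval (a i) := by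
  simp only [alternantCoeff, Matrix.det_apply', Finset.sum_mul]
  rw [Finset.sum_comm, ← vandermonde_alternating_sum, Finset.sum_mul]
  refine Finset.sum_congr rfl fun σ _ => ?_
  have h := sum_prod_pi fun (i : Fin N) (r : Fin (R + N)) =>
    ((X : ℂ[X]) ^ (σ i : ℕ) * d).coeff (r : ℕ) * a i ^ (r : ℕ)
  simp only [sum_coeff_X_pow_mul hd, Finset.prod_mul_distrib] at h
  simp only [mul_assoc, ← Finset.mul_sum, Matrix.of_apply, h]

lemma sum_weight_mul_prod {N n : ℕ} (f : Fin N → Fin n → ℂ) (w : Fin n → ℂ) (s : Fin N → ℂ)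
    (F : Fin N → ℂ) (h0 : ∀ i, ∑ r, f i r = F i) (h1 : ∀ i, ∑ r, w r * f i r = F i * s i) :
    ∑ m : Fin N → Fin n, (∑ i, w (m i)) * ∏ i, f i (m i) = (∏ i, F i) * ∑ i, s i := by
  simp only [Finset.sum_mul]
  rw [Finset.sum_comm, Finset.mul_sum]
  refine Finset.sum_congr rfl fun i _ => ?_
  have h (m : Fin N → Fin n) : w (m i) * ∏ j, f j (m j) =
      ∏ j, (if j = i then w (m j) else 1) * f j (m j) := by
    rw [Finset.prod_mul_distrib, Finset.prod_ite_eq' Finset.univ i fun j => w (m j)]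
    simp
  simp only [h]
  rw [sum_prod_pi fun j r => (if j = i then w r else 1) * f j r,
    ← Finset.mul_prod_erase Finset.univ _ (Finset.mem_univ i),
    ← Finset.mul_prod_erase Finset.univ F (Finset.mem_univ i)]
  simp only [if_true, h1]
  have h2 : ∀ j ∈ Finset.univ.erase i, ∑ r, (if j = i then w r else 1) * f j r = F j := by
    intro j hj
    simp only [if_neg (Finset.ne_of_mem_erase hj), one_mul, h0]
  rw [Finset.prod_congr rfl h2]
  ring

lemma sum_weight_alternantCoeff {N R : ℕ} {d : ℂ[X]} (hd : d.natDegree ≤ R) (c : ℂ)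
    {a : Fin N → ℂ} (ha : Function.Injective a) (t : Fin N → ℂ) (ρ : Fin N → Fin N → ℂ)
    (h1 : ∀ i, a i * d.derivative.eval (a i) = d.eval (a i) * t i)
    (h2 : ∀ i, a i ^ 2 * d.derivative.derivative.eval (a i) =
      d.eval (a i) * (t i ^ 2 - ρ i i))
    (h3 : ∀ i j, (a j - a i) * ρ i j = a j * t i - a i * t j) (hρ : ∀ i j, ρ i j = ρ j i) :
    ∑ m : Fin N → Fin (R + N), (∑ i, (((m i : ℕ) : ℂ) ^ 2 - c * ((m i : ℕ) : ℂ))) *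
        (alternantCoeff d (fun i => m i) * ∏ i, a i ^ (m i : ℕ)) =
      (∏ i, ∏ j ∈ Finset.Ioi i, (a j - a i)) * (∏ i, d.eval (a i)) *
        (∑ i : Fin N, ((i : ℂ) ^ 2 - c * i) + ∑ i, (t i ^ 2 + (2 * N - 1 - c) * t i)
          - ∑ i, ∑ j, ρ i j) := by
  have hS (σ : Equiv.Perm (Fin N)) (i : Fin N) :
      ∑ r : Fin (R + N), (((r : ℕ) : ℂ) ^ 2 - c * ((r : ℕ) : ℂ)) *
          ((X ^ (σ i : ℕ) * d).coeff (r : ℕ) * a i ^ (r : ℕ)) =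
        (a i ^ (σ i : ℕ) * d.eval (a i)) * ((σ i : ℂ) ^ 2 - c * σ i + 2 * (σ i * t i) +
          (t i ^ 2 - ρ i i + (1 - c) * t i)) := by
    rw [sum_coeff_mul_pow_weighted _ (natDegree_X_pow_mul_lt hd (σ i))]
    have e1 := h1 i
    have e2 := h2 i
    rcases (σ i : ℕ) with _ | _ | s
    · simp
      linear_combination e2 + (1 - c) * e1
    · simp
      linear_combination a i * e2 + a i * (3 - c) * e1
    · simp
      linear_combination a i ^ (s + 2) * e2 + a i ^ (s + 2) * (2 * s + 5 - c) * e1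
  have hσ (σ : Equiv.Perm (Fin N)) :
      ∑ m : Fin N → Fin (R + N), (∑ i, (((m i : ℕ) : ℂ) ^ 2 - c * ((m i : ℕ) : ℂ))) *
        ∏ i, ((X ^ (σ i : ℕ) * d).coeff (m i : ℕ) * a i ^ (m i : ℕ)) =
      (∏ i, a i ^ (σ i : ℕ)) * (∏ i, d.eval (a i)) * (∑ i : Fin N, ((i : ℂ) ^ 2 - c * i) +
        2 * ∑ i, (σ i : ℂ) * t i + ∑ i, (t i ^ 2 - ρ i i + (1 - c) * t i)) := by
    rw [sum_weight_mul_prod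
      (fun i (r : Fin (R + N)) => ((X : ℂ[X]) ^ (σ i : ℕ) * d).coeff (r : ℕ) * a i ^ (r : ℕ))
      (fun r => ((r : ℕ) : ℂ) ^ 2 - c * ((r : ℕ) : ℂ)) _ _
      (fun i => sum_coeff_X_pow_mul hd (σ i) (a i)) (hS σ), Finset.prod_mul_distrib,
      Finset.sum_add_distrib, Finset.sum_add_distrib, ← Finset.mul_sum,
      Equiv.sum_comp σ fun i : Fin N => ((i : ℂ) ^ 2 - c * i)]
  have hpair : 2 * ∑ i, ∑ j ∈ Finset.Ioi i, (a j * t j - a i * t i) / (a j - a i) =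
      ∑ i, (2 * N - 2) * t i + ∑ i, ρ i i - ∑ i, ∑ j, ρ i j := by
    have h4 := Finset.sum_sum_Ioi_add_eq_sum_sum_off_diag fun i j => t i + t j - ρ i j
    have h5 : ∀ i, ∑ j ∈ ({i} : Finset (Fin N))ᶜ, (t j + t i - ρ j i) =
        ∑ j, (t j + t i - ρ j i) - (2 * t i - ρ i i) := fun i => by
      rw [← Finset.sum_compl_add_sum {i}]
      simp
      ring
    simp only [h5] at h4
    rw [Finset.mul_sum]
    simp only [Finset.mul_sum]
    trans ∑ i, ∑ j ∈ Finset.Ioi i, (t j + t i - ρ j i + (t i + t j - ρ i j))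
    · refine Finset.sum_congr rfl fun i _ => Finset.sum_congr rfl fun j hj => ?_
      have hne : a j - a i ≠ 0 := sub_ne_zero.mpr fun h => (Finset.mem_Ioi.mp hj).ne' (ha h)
      rw [hρ j i]
      field_simp
      linear_combination (2 : ℂ) * h3 i j
    · rw [h4]
      simp only [Finset.sum_sub_distrib, Finset.sum_add_distrib, Finset.sum_const,
        Finset.card_univ, Fintype.card_fin, nsmul_eq_mul, ← Finset.mul_sum]
      rw [Finset.sum_comm (f := fun i j => ρ j i)]
      ring
  calc _ = ∑ σ : Equiv.Perm (Fin N), ((Equiv.Perm.sign σ : ℤ) : ℂ) *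
        ∑ m : Fin N → Fin (R + N), (∑ i, (((m i : ℕ) : ℂ) ^ 2 - c * ((m i : ℕ) : ℂ))) *
        ∏ i, ((X ^ (σ i : ℕ) * d).coeff (m i : ℕ) * a i ^ (m i : ℕ)) := by
        simp only [Finset.mul_sum (s := (Finset.univ : Finset (Fin N → Fin (R + N))))]
        rw [Finset.sum_comm]
        refine Finset.sum_congr rfl fun m _ => ?_
        generalize ∑ i, (((m i : ℕ) : ℂ) ^ 2 - c * ((m i : ℕ) : ℂ)) = W
        rw [alternantCoeff, Matrix.det_apply', Finset.sum_mul, Finset.mul_sum]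
        refine Finset.sum_congr rfl fun σ _ => ?_
        simp only [Matrix.of_apply, Finset.prod_mul_distrib]
        ring
    _ = (∏ i, d.eval (a i)) * (∑ i : Fin N, ((i : ℂ) ^ 2 - c * i) +
          ∑ i, (t i ^ 2 - ρ i i + (1 - c) * t i)) *
          (∑ σ : Equiv.Perm (Fin N), ((Equiv.Perm.sign σ : ℤ) : ℂ) * ∏ i, a i ^ (σ i : ℕ)) +
        2 * (∏ i, d.eval (a i)) * ∑ σ : Equiv.Perm (Fin N), ((Equiv.Perm.sign σ : ℤ) : ℂ) *
          ((∏ i, a i ^ (σ i : ℕ)) * ∑ i, (σ i : ℂ) * t i) := by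
        rw [Finset.mul_sum, Finset.mul_sum, ← Finset.sum_add_distrib]
        refine Finset.sum_congr rfl fun σ _ => ?_
        rw [hσ]
        ring
    _ = _ := by
        rw [vandermonde_alternating_sum, vandermonde_directional_deriv ha]
        simp only [Finset.sum_sub_distrib, Finset.sum_add_distrib, ← Finset.mul_sum] at hpair ⊢
        linear_combination (∏ i, ∏ j ∈ Finset.Ioi i, (a j - a i)) * (∏ i, d.eval (a i)) * hpair

end Alternant

section Uniqueness

open Matrix

/-- Two polynomial functions, given as sums of monomials, that agree at all points of the open unit
polydisc with distinct nonzero coordinates have the same coefficients. -/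
lemma sum_filter_eq_of_forall_sum_mul_prod_pow {N : ℕ} {ι κ : Type*} [Fintype ι] [Fintype κ]
    (p : ι → ℂ) (x : ι → Fin N → ℕ) (q : κ → ℂ) (y : κ → Fin N → ℕ)
    (h : ∀ a : Fin N → ℂ, Function.Injective a → (∀ i, ‖a i‖ < 1) → (∀ i, a i ≠ 0) →
      ∑ r, p r * ∏ i, a i ^ x r i = ∑ r, q r * ∏ i, a i ^ y r i) (e : Fin N → ℕ) :
    ∑ r with x r = e, p r = ∑ r with y r = e, q r := by
  have h0 : ∑ r, MvPolynomial.monomial (Finsupp.equivFunOnFinite.symm (x r)) (p r) =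
      ∑ r, MvPolynomial.monomial (Finsupp.equivFunOnFinite.symm (y r)) (q r) := by
    refine MvPolynomial.funext_set
      (fun i : Fin N => ((↑) : ℝ → ℂ) '' Set.Ioo ((i : ℝ) / N) (((i : ℝ) + 1) / N)) ?_ ?_
    · intro i
      have hN : (0 : ℝ) < N := by exact_mod_cast i.pos
      exact (Set.Ioo_infinite (by gcongr; linarith)).image Complex.ofReal_injective.injOn
    · intro a ha
      choose u hu hua using fun i => ha i (Set.mem_univ i)
      have hlt : ∀ i j, i < j → u i < u j := fun i j hij => by
        have hN : (0 : ℝ) < N := by exact_mod_cast i.pos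
        refine (hu i).2.trans (lt_of_le_of_lt ?_ (hu j).1)
        gcongr
        exact_mod_cast hij
      have hpos (i) : 0 < u i := lt_of_le_of_lt (by positivity) (hu i).1
      simp only [map_sum, MvPolynomial.eval_monomial,
        Finsupp.prod_fintype _ _ fun i => pow_zero _]
      refine h a ?_ ?_ ?_
      · intro i j hij
        rw [← hua i, ← hua j] at hij
        exact (StrictMono.injective hlt) (Complex.ofReal_injective hij)
      · intro i
        have hN : (0 : ℝ) < N := by exact_mod_cast i.pos
        rw [← hua i, Complex.norm_real, Real.norm_of_nonneg (hpos i).le]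
        refine (hu i).2.trans_le ?_
        rw [div_le_one hN]
        exact_mod_cast i.isLt
      · intro i
        rw [← hua i]
        exact_mod_cast (hpos i).ne'
  have h1 := congrArg (MvPolynomial.coeff (Finsupp.equivFunOnFinite.symm e)) h0
  simpa only [MvPolynomial.coeff_sum, MvPolynomial.coeff_monomial,
    Finsupp.equivFunOnFinite.symm.injective.eq_iff, Finset.sum_filter] using h1

lemma eq_zero_of_forall_sum_mul_prod_pow {N n : ℕ} (q : (Fin N → Fin n) → ℂ)
    (h : ∀ a : Fin N → ℂ, Function.Injective a → (∀ i, ‖a i‖ < 1) →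
      ∑ m, q m * ∏ i, a i ^ (m i : ℕ) = 0) (m : Fin N → Fin n) : q m = 0 := by
  have h1 := sum_filter_eq_of_forall_sum_mul_prod_pow q (fun m i => (m i : ℕ)) (κ := Empty)
    Empty.elim Empty.elim (fun a h1 h2 _ => by simpa using h a h1 h2) (fun i => m i)
  have h2 : Finset.univ.filter (fun r : Fin N → Fin n => (fun i => (r i : ℕ)) = fun i => (m i : ℕ))
      = {m} := by
    ext r
    simp [funext_iff, Fin.ext_iff]
  simpa [h2] using h1

variable {R : ℕ}

lemma natDegree_revCharpoly_le (A : Matrix (Fin R) (Fin R) ℂ) :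
    (revCharpoly A).natDegree ≤ R := by
  have := natDegree_det_X_add_C_le A 1
  rwa [Matrix.map_one _ C.map_zero C.map_one, add_comm, Fintype.card_fin] at this

lemma coeff_revCharpoly_zero (A : Matrix (Fin R) (Fin R) ℂ) : (revCharpoly A).coeff 0 = 1 := by
  have := coeff_det_X_add_C_zero A 1
  rwa [Matrix.map_one _ C.map_zero C.map_one, add_comm, det_one] at this

lemma coeff_revCharpoly_card (A : Matrix (Fin R) (Fin R) ℂ) :
    (revCharpoly A).coeff R = A.det := by
  have := coeff_det_X_add_C_card A 1
  rwa [Matrix.map_one _ C.map_zero C.map_one, add_comm, Fintype.card_fin] at this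

lemma continuous_coeff_prod {T ι : Type*} [TopologicalSpace T] (s : Finset ι) {f : ι → T → ℂ[X]}
    (hf : ∀ i j, Continuous fun x => (f i x).coeff j) (j : ℕ) :
    Continuous fun x => (∏ i ∈ s, f i x).coeff j := by
  classical
  induction s using Finset.induction_on generalizing j with
  | empty => simpa using continuous_const
  | insert i s hi ih =>
    simp only [Finset.prod_insert hi, coeff_mul]
    exact continuous_finsetSum _ fun p _ => (hf i p.1).mul (ih p.2)

lemma continuous_coeff_revCharpoly (j : ℕ) :
    Continuous fun θ : Matrix.unitaryGroup (Fin R) ℂ =>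
      (revCharpoly (θ : Matrix (Fin R) (Fin R) ℂ)).coeff j := by
  simp only [revCharpoly, Matrix.det_apply', finsetSum_coeff, ← map_intCast (C : ℂ →+* ℂ[X]),
    coeff_C_mul]
  refine continuous_finsetSum _ fun σ _ => continuous_const.mul
    (continuous_coeff_prod _ (fun i l => ?_) j)
  have h : Continuous fun θ : Matrix.unitaryGroup (Fin R) ℂ =>
      (θ : Matrix (Fin R) (Fin R) ℂ) (σ i) i :=
    continuous_subtype_val.matrix_elem (σ i) i
  simp only [Matrix.add_apply, Matrix.smul_apply, Matrix.map_apply, coeff_add, smul_eq_mul]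
  refine continuous_const.add ?_
  rcases l with _ | l
  · simpa using continuous_const
  · simp only [coeff_X_mul, coeff_C]
    split_ifs
    exacts [h, continuous_const]

lemma continuous_alternantCoeff {N : ℕ} (m : Fin N → ℕ) :
    Continuous fun θ : Matrix.unitaryGroup (Fin R) ℂ =>
      alternantCoeff (revCharpoly (θ : Matrix (Fin R) (Fin R) ℂ)) m := by
  refine Continuous.matrix_det (continuous_matrix fun j i => ?_)
  simp only [Matrix.of_apply, coeff_X_pow_mul']
  split_ifs
  exacts [continuous_coeff_revCharpoly _, continuous_const]

lemma alternantCoeff_comp_perm {N : ℕ} (d : ℂ[X]) (m : Fin N → ℕ) (σ : Equiv.Perm (Fin N)) :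
    alternantCoeff d (fun i => m (σ i)) = (Equiv.Perm.sign σ : ℤ) * alternantCoeff d m :=
  Matrix.det_permute' σ (Matrix.of fun j i : Fin N => ((X : ℂ[X]) ^ (j : ℕ) * d).coeff (m i))

lemma alternantCoeff_of_not_injective {N : ℕ} (d : ℂ[X]) {m : Fin N → ℕ}
    (hm : ¬ Function.Injective m) : alternantCoeff d m = 0 := by
  rw [Function.not_injective_iff] at hm
  obtain ⟨i, j, hij, hne⟩ := hm
  exact Matrix.det_zero_of_column_eq hne fun l => by simp [hij]

/-- The exponents `0, …, k - 1, R + k, …, R + 2 * k - 1`. -/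
def extremalExponent (k R : ℕ) (i : Fin (k + k)) : Fin (R + (k + k)) :=
  ⟨if (i : ℕ) < k then i else R + i, by split_ifs <;> omega⟩

lemma extremalExponent_injective (k R : ℕ) : Function.Injective (extremalExponent k R) := by
  intro i j h
  simp only [extremalExponent, Fin.mk.injEq] at h
  ext
  split_ifs at h <;> omega

lemma alternantCoeff_extremalExponent (k : ℕ) (A : Matrix (Fin R) (Fin R) ℂ) :
    alternantCoeff (revCharpoly A) (fun i => extremalExponent k R i) = A.det ^ k := by
  rw [alternantCoeff, ← Matrix.det_submatrix_equiv_self finSumFinEquiv,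
    ← Matrix.fromBlocks_toBlocks (Matrix.submatrix _ _ _)]
  have h12 : (Matrix.submatrix (Matrix.of fun j i : Fin (k + k) =>
      (X ^ (j : ℕ) * revCharpoly A).coeff (extremalExponent k R i))
        finSumFinEquiv finSumFinEquiv).toBlocks₁₂ = 0 := by
    ext i j
    simp only [Matrix.toBlocks₁₂, Matrix.submatrix_apply, Matrix.of_apply, coeff_X_pow_mul',
      finSumFinEquiv_apply_left, finSumFinEquiv_apply_right, Fin.val_castAdd, Fin.val_natAdd,
      extremalExponent, Matrix.zero_apply, if_neg (show ¬ k + (j : ℕ) < k by omega)]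
    rw [if_pos (by omega)]
    exact coeff_eq_zero_of_natDegree_lt ((natDegree_revCharpoly_le A).trans_lt (by omega))
  rw [h12, Matrix.det_fromBlocks_zero₁₂, Matrix.det_of_isUpperTriangular,
    Matrix.det_of_isLowerTriangular]
  · have e1 (i : Fin k) : (Matrix.submatrix (Matrix.of fun j i : Fin (k + k) =>
      (X ^ (j : ℕ) * revCharpoly A).coeff (extremalExponent k R i))
        finSumFinEquiv finSumFinEquiv).toBlocks₁₁ i i = 1 := by
      simp [Matrix.toBlocks₁₁, coeff_X_pow_mul', extremalExponent, coeff_revCharpoly_zero]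
    have e2 (i : Fin k) : (Matrix.submatrix (Matrix.of fun j i : Fin (k + k) =>
      (X ^ (j : ℕ) * revCharpoly A).coeff (extremalExponent k R i))
        finSumFinEquiv finSumFinEquiv).toBlocks₂₂ i i = A.det := by
      simp [Matrix.toBlocks₂₂, coeff_X_pow_mul', extremalExponent, coeff_revCharpoly_card]
    simp [e1, e2]
  · intro i j hij
    have : (i : ℕ) < j := hij
    simp only [Matrix.toBlocks₂₂, Matrix.submatrix_apply, Matrix.of_apply, coeff_X_pow_mul',
      finSumFinEquiv_apply_right, Fin.val_natAdd, extremalExponent,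
      if_neg (show ¬ k + (j : ℕ) < k by omega)]
    rw [if_pos (by omega)]
    exact coeff_eq_zero_of_natDegree_lt ((natDegree_revCharpoly_le A).trans_lt (by omega))
  · intro i j hij
    have : (j : ℕ) < i := hij
    simp only [Matrix.toBlocks₁₁, Matrix.submatrix_apply, Matrix.of_apply, coeff_X_pow_mul',
      finSumFinEquiv_apply_left, Fin.val_castAdd, extremalExponent,
      if_pos (show (j : ℕ) < k from j.isLt)]
    rw [if_neg (by omega)]

/-- Among all injective exponent vectors, only the rearrangements of `extremalExponent` attain the
extremal value of the quadratic weight. -/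
lemma exists_perm_of_weight_eq (k : ℕ) {m : Fin (k + k) → Fin (R + (k + k))}
    (hm : Function.Injective m)
    (hw : ∑ i, (((m i : ℕ) : ℤ) ^ 2 - (R + 2 * k - 1) * ((m i : ℕ) : ℤ)) =
      ∑ i, (((extremalExponent k R i : ℕ) : ℤ) ^ 2 -
        (R + 2 * k - 1) * ((extremalExponent k R i : ℕ) : ℤ))) :
    ∃ σ : Equiv.Perm (Fin (k + k)), m = extremalExponent k R ∘ σ := by
  classical
  set h : Fin (R + (k + k)) → ℤ := fun x => ((x : ℕ) - k + 1) * (R + k - (x : ℕ)) with hh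
  set S := Finset.univ.image m
  set S0 := Finset.univ.image (extremalExponent k R) with hS0
  have hsum : ∑ x ∈ S, h x = ∑ x ∈ S0, h x := by
    rw [Finset.sum_image fun _ _ _ _ e => hm e,
      Finset.sum_image fun _ _ _ _ e => extremalExponent_injective k R e, ← sub_eq_zero,
      ← Finset.sum_sub_distrib]
    rw [← sub_eq_zero, ← Finset.sum_sub_distrib] at hw
    rw [← neg_eq_zero, ← Finset.sum_neg_distrib, ← hw]
    refine Finset.sum_congr rfl fun i _ => ?_
    simp only [hh]
    ring
  have hin : ∀ x ∈ S0, h x ≤ 0 := by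
    intro x hx
    obtain ⟨i, -, rfl⟩ := Finset.mem_image.mp hx
    simp only [hh, extremalExponent]
    have := i.isLt
    split_ifs with hi
    · exact mul_nonpos_of_nonpos_of_nonneg (by omega) (by omega)
    · exact mul_nonpos_of_nonneg_of_nonpos (by omega) (by omega)
  have hout : ∀ x ∉ S0, 0 < h x := by
    intro x hx
    have hx1 : k ≤ (x : ℕ) := by
      by_contra! hlt
      exact hx (Finset.mem_image.mpr ⟨⟨x, by omega⟩, Finset.mem_univ _, by
        simp [extremalExponent, hlt]⟩)
    have hx2 : (x : ℕ) < R + k := by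
      by_contra! hlt
      have := x.isLt
      refine hx (Finset.mem_image.mpr ⟨⟨x - R, by omega⟩, Finset.mem_univ _, ?_⟩)
      ext
      simp only [extremalExponent]
      rw [if_neg (by omega)]
      omega
    exact mul_pos (by omega) (by omega)
  have hsub : S ⊆ S0 := by
    by_contra hns
    have hne : (S \ S0).Nonempty := Finset.sdiff_nonempty.mpr hns
    have h1 : 0 < ∑ x ∈ S \ S0, h x :=
      Finset.sum_pos (fun x hx => hout x (Finset.mem_sdiff.mp hx).2) hne
    have h2 : ∑ x ∈ S0 \ S, h x ≤ 0 :=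
      Finset.sum_nonpos fun x hx => hin x (Finset.mem_sdiff.mp hx).1
    have h3 := Finset.sum_sdiff_sub_sum_sdiff (s₁ := S) (s₂ := S0) (f := h)
    linarith
  have hch : ∀ i, ∃ j, extremalExponent k R j = m i := fun i => by
    have := hsub (Finset.mem_image_of_mem m (Finset.mem_univ i))
    simpa [hS0] using this
  choose σ hσ using hch
  have hinj : Function.Injective σ := fun i j hij => hm (by rw [← hσ i, ← hσ j, hij])
  exact ⟨Equiv.ofBijective σ (Finite.injective_iff_bijective.mp hinj), funext fun i => (hσ i).symm⟩

variable (μ : Measure (Matrix.unitaryGroup (Fin R) ℂ)) [IsProbabilityMeasure μ]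

/-- The coefficient of `a^m` in the product of the Vandermonde determinant of `a` with the average
of `charProduct k a`. -/
noncomputable def averagedAlternant (k : ℕ) (m : Fin (k + k) → ℕ) : ℂ :=
  ∫ θ, (θ : Matrix (Fin R) (Fin R) ℂ).det⁻¹ ^ k *
    alternantCoeff (revCharpoly (θ : Matrix (Fin R) (Fin R) ℂ)) m ∂μ

lemma continuous_det_inv_pow (k : ℕ) : Continuous fun θ : Matrix.unitaryGroup (Fin R) ℂ =>
    (θ : Matrix (Fin R) (Fin R) ℂ).det⁻¹ ^ k :=
  (continuous_subtype_val.matrix_det.inv₀ fun θ => (isUnit_det_unitary θ).ne_zero).pow k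

lemma sum_mul_averagedAlternant (k : ℕ) (w : (Fin (k + k) → Fin (R + (k + k))) → ℂ) :
    ∑ m, w m * averagedAlternant μ k (fun i => m i) =
      ∫ θ, (θ : Matrix (Fin R) (Fin R) ℂ).det⁻¹ ^ k * ∑ m : Fin (k + k) → Fin (R + (k + k)),
        w m * alternantCoeff (revCharpoly (θ : Matrix (Fin R) (Fin R) ℂ)) (fun i => m i) ∂μ := by
  simp only [averagedAlternant, ← integral_const_mul]
  rw [← integral_finsetSum]
  · refine integral_congr_ae (.of_forall fun θ => ?_)
    simp only [Finset.mul_sum]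
    exact Finset.sum_congr rfl fun m _ => by ring
  · intro m _
    exact (continuous_const.mul ((continuous_det_inv_pow k).mul
      (continuous_alternantCoeff _))).integrable_unitaryGroup μ

lemma averagedAlternant_extremalExponent (k : ℕ) :
    averagedAlternant μ k (fun i => extremalExponent k R i) = 1 := by
  have h (θ : Matrix.unitaryGroup (Fin R) ℂ) : (θ : Matrix (Fin R) (Fin R) ℂ).det⁻¹ ^ k *
      (θ : Matrix (Fin R) (Fin R) ℂ).det ^ k = 1 := by
    rw [← mul_pow, inv_mul_cancel₀ (isUnit_det_unitary θ).ne_zero, one_pow]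
  simp only [averagedAlternant, alternantCoeff_extremalExponent, h]
  simp

variable [μ.IsHaarMeasure]

lemma weight_mul_averagedAlternant (k : ℕ) (m : Fin (k + k) → Fin (R + (k + k))) :
    (∑ i, (((m i : ℕ) : ℂ) ^ 2 - (R + 2 * k - 1) * ((m i : ℕ) : ℂ)) -
        (∑ i : Fin (k + k), (((i : ℕ) : ℂ) ^ 2 - (R + 2 * k - 1) * ((i : ℕ) : ℂ)) + k ^ 2 * R)) *
      averagedAlternant μ k (fun i => m i) = 0 := by
  refine eq_zero_of_forall_sum_mul_prod_pow (fun m : Fin (k + k) → Fin (R + (k + k)) =>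
    (∑ i, (((m i : ℕ) : ℂ) ^ 2 - (R + 2 * k - 1) * ((m i : ℕ) : ℂ)) -
        (∑ i : Fin (k + k), (((i : ℕ) : ℂ) ^ 2 - (R + 2 * k - 1) * ((i : ℕ) : ℂ)) + k ^ 2 * R)) *
      averagedAlternant μ k (fun i => m i)) (fun a ha hlt => ?_) m
  set κ : ℂ := ∑ i : Fin (k + k), (((i : ℕ) : ℂ) ^ 2 - (R + 2 * k - 1) * ((i : ℕ) : ℂ)) with hκ
  simp only [mul_right_comm _ (averagedAlternant _ _ _)]
  rw [sum_mul_averagedAlternant, ← neg_eq_zero, ← integral_neg]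
  have hcas := integral_casimir_charProduct μ k hlt
  have hcas' := congrArg (fun z => (∏ i, ∏ j ∈ Finset.Ioi i, (a j - a i)) * z) hcas
  simp only [mul_zero, ← integral_const_mul] at hcas'
  rw [← hcas']
  refine integral_congr_ae (.of_forall fun θ => ?_)
  have hu (i) : IsUnit (1 + a i • (θ : Matrix (Fin R) (Fin R) ℂ)).det :=
    isUnit_det_one_add_smul (hlt i) θ
  have hd := natDegree_revCharpoly_le (θ : Matrix (Fin R) (Fin R) ℂ)
  have e1 := sum_weight_alternantCoeff hd (R + 2 * k - 1) ha
    (fun i => (cayleyResolvent (a i) (θ : Matrix (Fin R) (Fin R) ℂ)).trace)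
    (fun i j => (cayleyResolvent (a i) (θ : Matrix (Fin R) (Fin R) ℂ) *
      cayleyResolvent (a j) (θ : Matrix (Fin R) (Fin R) ℂ)).trace)
    (fun i => mul_eval_derivative_revCharpoly (hu i))
    (fun i => sq_mul_eval_derivative_derivative_revCharpoly (hu i))
    (fun i j => sub_mul_trace_cayleyResolvent_mul (hu i) (hu j))
    (fun i j => Matrix.trace_mul_comm _ _)
  have e2 := sum_alternantCoeff hd a
  simp only [trace_logDerivMatrix_sq, charProduct, ← eval_revCharpoly]
  have e3 : ∑ m : Fin (k + k) → Fin (R + (k + k)),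
      (∑ i, (((m i : ℕ) : ℂ) ^ 2 - (R + 2 * k - 1) * ((m i : ℕ) : ℂ)) - (κ + k ^ 2 * R)) *
        (∏ i, a i ^ (m i : ℕ)) *
        alternantCoeff (revCharpoly (θ : Matrix (Fin R) (Fin R) ℂ)) (fun i => m i) =
      (∏ i, ∏ j ∈ Finset.Ioi i, (a j - a i)) *
        (∏ i, (revCharpoly (θ : Matrix (Fin R) (Fin R) ℂ)).eval (a i)) *
        (∑ i, ((cayleyResolvent (a i) (θ : Matrix (Fin R) (Fin R) ℂ)).trace ^ 2 +
            (2 * ((k + k : ℕ) : ℂ) - 1 - (R + 2 * k - 1)) *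
              (cayleyResolvent (a i) (θ : Matrix (Fin R) (Fin R) ℂ)).trace)
          - ∑ i, ∑ j, (cayleyResolvent (a i) (θ : Matrix (Fin R) (Fin R) ℂ) *
            cayleyResolvent (a j) (θ : Matrix (Fin R) (Fin R) ℂ)).trace - k ^ 2 * R) := by
    rw [← hκ] at e1
    have e4 (K : ℂ) (w z u : (Fin (k + k) → Fin (R + (k + k))) → ℂ) :
        ∑ m, (w m - K) * z m * u m = ∑ m, w m * (u m * z m) - K * ∑ m, u m * z m := by
      rw [Finset.mul_sum, ← Finset.sum_sub_distrib]
      exact Finset.sum_congr rfl fun m _ => by ring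
    rw [e4, e1, e2]
    ring
  rw [e3]
  simp only [sub_mul, Finset.sum_sub_distrib, Finset.sum_add_distrib, ← Finset.mul_sum, ← pow_two]
  push_cast
  ring

lemma vandermonde_mul_integral_charProduct (k : ℕ) (a : Fin (k + k) → ℂ) :
    (∏ i, ∏ j ∈ Finset.Ioi i, (a j - a i)) *
      ∫ θ, charProduct k a (θ : Matrix (Fin R) (Fin R) ℂ) ∂μ =
    (Matrix.of fun i j : Fin (k + k) => a i ^ (extremalExponent k R j : ℕ)).det := by
  classical
  have hzero (m : Fin (k + k) → Fin (R + (k + k)))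
      (hm : averagedAlternant μ k (fun i => m i) ≠ 0) :
      ∃ σ : Equiv.Perm (Fin (k + k)), m = extremalExponent k R ∘ σ := by
    refine exists_perm_of_weight_eq k ?_ ?_
    · by_contra hinj
      refine hm ?_
      have hinj' : ¬ Function.Injective fun i => (m i : ℕ) := fun h =>
        hinj fun i j hij => h (congrArg _ hij)
      simp [averagedAlternant, alternantCoeff_of_not_injective _ hinj']
    · have h1 := (mul_eq_zero.mp (weight_mul_averagedAlternant μ k m)).resolve_right hm
      have h2 := weight_mul_averagedAlternant μ k (extremalExponent k R)
      rw [averagedAlternant_extremalExponent, mul_one] at h2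
      rw [sub_eq_zero] at h1 h2
      have h3 := h1.trans h2.symm
      exact_mod_cast h3
  have hperm (σ : Equiv.Perm (Fin (k + k))) :
      averagedAlternant μ k (fun i => extremalExponent k R (σ i)) =
        ((Equiv.Perm.sign σ : ℤ) : ℂ) := by
    have h := averagedAlternant_extremalExponent μ k
    simp only [averagedAlternant] at h ⊢
    simp only [alternantCoeff_comp_perm _ (fun i => (extremalExponent k R i : ℕ)),
      mul_left_comm _ (((Equiv.Perm.sign σ : ℤ) : ℂ)), integral_const_mul, h, mul_one]
  calc _ = ∑ m : Fin (k + k) → Fin (R + (k + k)), (∏ i, a i ^ (m i : ℕ)) *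
        averagedAlternant μ k (fun i => m i) := by
        rw [sum_mul_averagedAlternant, ← integral_const_mul]
        refine integral_congr_ae (.of_forall fun θ => ?_)
        simp only [mul_comm (Finset.prod _ _) (alternantCoeff _ _),
          sum_alternantCoeff (natDegree_revCharpoly_le _), charProduct, eval_revCharpoly]
        ring
    _ = ∑ m ∈ Finset.univ.image (fun σ : Equiv.Perm (Fin (k + k)) => extremalExponent k R ∘ σ),
        (∏ i, a i ^ (m i : ℕ)) * averagedAlternant μ k (fun i => m i) := by
        refine (Finset.sum_subset (Finset.subset_univ _) fun m _ hm => ?_).symm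
        by_contra hne
        obtain ⟨σ, hσ⟩ := hzero m (right_ne_zero_of_mul hne)
        exact hm (Finset.mem_image.mpr ⟨σ, Finset.mem_univ _, hσ.symm⟩)
    _ = ∑ σ : Equiv.Perm (Fin (k + k)), ((Equiv.Perm.sign σ : ℤ) : ℂ) *
        ∏ i, a i ^ (extremalExponent k R (σ i) : ℕ) := by
        rw [Finset.sum_image]
        · refine Finset.sum_congr rfl fun σ _ => ?_
          simp only [Function.comp_apply, hperm]
          exact mul_comm _ _
        · intro σ _ τ _ h
          exact Equiv.ext fun i => extremalExponent_injective k R (congrFun h i)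
    _ = _ := by
        rw [← Matrix.det_transpose, Matrix.det_apply']
        rfl

end Uniqueness

section BlockDeterminant

open Matrix

variable {k : ℕ}

lemma lagrange_mul_vandermonde {b : Fin k → ℂ} (hb : Function.Injective b) (a : Fin k → ℂ) :
    (Matrix.of fun i j => (Lagrange.basis Finset.univ b j).eval (a i)) * vandermonde b =
      vandermonde a := by
  ext i m
  have hdeg : ((X : ℂ[X]) ^ (m : ℕ)).degree < (Finset.univ : Finset (Fin k)).card := by
    rw [degree_X_pow, Finset.card_univ, Fintype.card_fin]
    exact_mod_cast m.isLt
  have h := congrArg (eval (a i)) (Lagrange.eq_interpolate (v := b) hb.injOn hdeg)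
  simp only [Lagrange.interpolate_apply, eval_finsetSum, eval_mul, eval_C, eval_pow, eval_X] at h
  rw [Matrix.mul_apply, vandermonde_apply, h]
  exact Finset.sum_congr rfl fun j _ => mul_comm _ _

lemma eval_lagrange_basis_mul_sub (b : Fin k → ℂ) (j : Fin k) (x : ℂ) :
    (Lagrange.basis Finset.univ b j).eval x * (x - b j) =
      (∏ l, (x - b l)) * (∏ l ∈ Finset.univ.erase j, (b j - b l))⁻¹ := by
  rw [← Finset.mul_prod_erase Finset.univ _ (Finset.mem_univ j)]
  simp only [Lagrange.basis, Lagrange.basisDivisor, eval_prod, eval_mul, eval_C, eval_sub, eval_X,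
    Finset.prod_mul_distrib, Finset.prod_inv_distrib]
  ring

/-- The matrix whose rows are `(1, x, …, x^{k-1}, x^L, …, x^{L+k-1})` for `x` in `b` and `a`. -/
noncomputable def gapVandermonde (L : ℕ) (b a : Fin k → ℂ) :
    Matrix (Fin k ⊕ Fin k) (Fin k ⊕ Fin k) ℂ :=
  Matrix.fromBlocks (vandermonde b) (diagonal (fun j => b j ^ L) * vandermonde b)
    (vandermonde a) (diagonal (fun i => a i ^ L) * vandermonde a)

/-- The kernel `∑_{m < L} aᵢ^m bⱼ^{L-1-m}`. -/
noncomputable def geomKernel (L : ℕ) (b a : Fin k → ℂ) : Matrix (Fin k) (Fin k) ℂ :=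
  (Matrix.of fun (i : Fin k) (m : Fin L) => a i ^ (m : ℕ)) *
    Matrix.of fun (m : Fin L) (j : Fin k) => b j ^ (L - 1 - m)

lemma det_gapVandermonde {b : Fin k → ℂ} (hb : Function.Injective b) (a : Fin k → ℂ) (L : ℕ) :
    (gapVandermonde L b a).det =
      (∏ i, ∏ j, (a i - b j)) * (∏ j, (∏ l ∈ Finset.univ.erase j, (b j - b l))⁻¹) *
        (vandermonde b).det ^ 2 * (geomKernel L b a).det := by
  set W : Matrix (Fin k) (Fin k) ℂ :=
    Matrix.of fun i j => (Lagrange.basis Finset.univ b j).eval (a i)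
  have hfac : gapVandermonde L b a =
      Matrix.fromBlocks 1 (diagonal fun j => b j ^ L) W (diagonal (fun i => a i ^ L) * W) *
        Matrix.fromBlocks (vandermonde b) 0 0 (vandermonde b) := by
    rw [Matrix.fromBlocks_multiply, gapVandermonde]
    simp [Matrix.mul_assoc, W, lagrange_mul_vandermonde hb a]
  have hent : diagonal (fun i => a i ^ L) * W - W * diagonal (fun j => b j ^ L) =
      Matrix.of fun i j => (∏ l, (a i - b l)) *
        (Matrix.of fun i j => (∏ l ∈ Finset.univ.erase j, (b j - b l))⁻¹ *
          geomKernel L b a i j) i j := by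
    ext i j
    have h1 : geomKernel L b a i j * (a i - b j) = a i ^ L - b j ^ L := by
      rw [← (Commute.all (a i) (b j)).geom_sum₂_mul, geomKernel, Matrix.mul_apply]
      congr 1
      exact Fin.sum_univ_eq_sum_range (fun m => a i ^ m * b j ^ (L - 1 - m)) L
    rw [Matrix.sub_apply, Matrix.diagonal_mul, Matrix.mul_diagonal]
    simp only [W, Matrix.of_apply]
    linear_combination -(Lagrange.basis Finset.univ b j).eval (a i) * h1 +
      geomKernel L b a i j * eval_lagrange_basis_mul_sub b j (a i)
  rw [hfac, Matrix.det_mul, Matrix.det_fromBlocks_one₁₁, hent, Matrix.det_mul_column,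
    Matrix.det_mul_row, Matrix.det_fromBlocks_zero₂₁]
  ring

lemma det_geomKernel_self (b a : Fin k → ℂ) :
    (geomKernel k b a).det =
      ((Equiv.Perm.sign (Fin.revPerm : Equiv.Perm (Fin k)) : ℤ) : ℂ) *
        (vandermonde a).det * (vandermonde b).det := by
  have h : geomKernel k b a = vandermonde a * ((vandermonde b)ᵀ.submatrix Fin.revPerm id) := by
    rw [geomKernel]
    congr 1
    ext m j
    simp only [Matrix.of_apply, Matrix.submatrix_apply, Matrix.transpose_apply, id, vandermonde_apply,
      Fin.revPerm_apply, Fin.val_rev]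
    congr 1
    omega
  rw [h, Matrix.det_mul, Matrix.det_permute, Matrix.det_transpose]
  ring

lemma det_gapVandermonde_eq_mul {b a : Fin k → ℂ} (hb : Function.Injective b) (L : ℕ) :
    (gapVandermonde L b a).det *
      (((Equiv.Perm.sign (Fin.revPerm : Equiv.Perm (Fin k)) : ℤ) : ℂ) *
        (vandermonde a).det * (vandermonde b).det) =
      (gapVandermonde k b a).det * (geomKernel L b a).det := by
  rw [det_gapVandermonde hb, det_gapVandermonde hb, ← det_geomKernel_self]
  ring

lemma det_extremal_eq_det_gapVandermonde (R : ℕ) (b a : Fin k → ℂ) :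
    (Matrix.of fun i j : Fin (k + k) =>
      Fin.append b a i ^ (extremalExponent k R j : ℕ)).det = (gapVandermonde (R + k) b a).det := by
  rw [← Matrix.det_submatrix_equiv_self finSumFinEquiv]
  congr 1
  ext i j
  rcases i with i | i <;> rcases j with j | j <;>
    simp only [Matrix.submatrix_apply, Matrix.of_apply, finSumFinEquiv_apply_left,
      finSumFinEquiv_apply_right, Fin.append_left, Fin.append_right, extremalExponent,
      Fin.val_castAdd, Fin.val_natAdd, gapVandermonde, Matrix.fromBlocks_apply₁₁,
      Matrix.fromBlocks_apply₁₂, Matrix.fromBlocks_apply₂₁, Matrix.fromBlocks_apply₂₂,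
      vandermonde_apply, Matrix.diagonal_mul, Fin.is_lt, if_true, add_lt_iff_neg_left, not_lt_zero,
      if_false] <;> ring

lemma det_vandermonde_append_eq (b a : Fin k → ℂ) :
    (vandermonde (Fin.append b a)).det = (gapVandermonde k b a).det := by
  rw [← Matrix.det_submatrix_equiv_self finSumFinEquiv]
  congr 1
  ext i j
  rcases i with i | i <;> rcases j with j | j <;>
    simp only [Matrix.submatrix_apply, finSumFinEquiv_apply_left, finSumFinEquiv_apply_right,
      Fin.append_left, Fin.append_right, Fin.val_castAdd, Fin.val_natAdd, gapVandermonde,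
      Matrix.fromBlocks_apply₁₁, Matrix.fromBlocks_apply₁₂, Matrix.fromBlocks_apply₂₁,
      Matrix.fromBlocks_apply₂₂, vandermonde_apply, Matrix.diagonal_mul] <;> ring

/-- A symmetrised Cauchy–Binet formula. -/
lemma factorial_mul_det_mul {L : ℕ} (A : Matrix (Fin k) (Fin L) ℂ) (B : Matrix (Fin L) (Fin k) ℂ) :
    (k.factorial : ℂ) * (A * B).det =
      ∑ m : Fin k → Fin L, (A.submatrix id m).det * (B.submatrix m id).det := by
  have h1 : (A * B).det = ∑ m : Fin k → Fin L, (∏ i, A i (m i)) * (B.submatrix m id).det := by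
    have h := (Matrix.detRowAlternating (n := Fin k) (R := ℂ)).toMultilinearMap.map_sum
      (g := fun i m => A i m • B m)
    have h2 : (A * B) = fun i => ∑ m, A i m • B m := by
      ext i j
      simp [Matrix.mul_apply]
    rw [h2]
    refine Eq.trans h (Finset.sum_congr rfl fun m _ => ?_)
    exact MultilinearMap.map_smul_univ _ _ _
  have h3 (σ : Equiv.Perm (Fin k)) : (A * B).det = ∑ m : Fin k → Fin L,
      ((Equiv.Perm.sign σ : ℤ) : ℂ) * (∏ i, A i (m (σ i))) * (B.submatrix m id).det := by
    rw [h1, ← (Equiv.arrowCongr σ.symm (Equiv.refl (Fin L))).sum_comp]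
    refine Finset.sum_congr rfl fun m _ => ?_
    have h4 : (B.submatrix (m ∘ σ) id).det =
        ((Equiv.Perm.sign σ : ℤ) : ℂ) * (B.submatrix m id).det :=
      Matrix.det_permute σ (B.submatrix m id)
    change (∏ i, A i (m (σ i))) * (B.submatrix (m ∘ σ) id).det = _
    rw [h4]
    ring
  calc (k.factorial : ℂ) * (A * B).det = ∑ σ : Equiv.Perm (Fin k), (A * B).det := by
        simp [Fintype.card_perm]
    _ = _ := by
        rw [Finset.sum_congr rfl fun σ _ => h3 σ, Finset.sum_comm]
        refine Finset.sum_congr rfl fun m _ => ?_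
        rw [← Finset.sum_mul, ← Matrix.det_transpose (A.submatrix id m), Matrix.det_apply' (A.submatrix id m)ᵀ]
        rfl

end BlockDeterminant

section Confluence

open Matrix Filter Topology

variable {k : ℕ}

lemma integral_charProduct_append_mul {R : ℕ} (μ : Measure (Matrix.unitaryGroup (Fin R) ℂ))
    [IsProbabilityMeasure μ] [μ.IsHaarMeasure] {b a : Fin k → ℂ}
    (hinj : Function.Injective (Fin.append b a)) :
    (∫ θ, charProduct k (Fin.append b a) (θ : Matrix (Fin R) (Fin R) ℂ) ∂μ) *
      (((Equiv.Perm.sign (Fin.revPerm : Equiv.Perm (Fin k)) : ℤ) : ℂ) *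
        (vandermonde a).det * (vandermonde b).det) = (geomKernel (R + k) b a).det := by
  have hb : Function.Injective b := fun i j hij => by
    have := @hinj (Fin.castAdd k i) (Fin.castAdd k j) (by simpa using hij)
    exact Fin.castAdd_injective _ _ this
  have h1 := vandermonde_mul_integral_charProduct μ k (Fin.append b a)
  rw [← Matrix.det_vandermonde, det_extremal_eq_det_gapVandermonde,
    det_vandermonde_append_eq] at h1
  have h2 := det_gapVandermonde_eq_mul (a := a) hb (R + k)
  have h0 : (gapVandermonde k b a).det ≠ 0 := by
    rw [← det_vandermonde_append_eq]
    exact Matrix.det_vandermonde_ne_zero_iff.2 hinj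
  rw [← h1, mul_assoc] at h2
  exact mul_left_cancel₀ h0 h2

lemma det_of_mul_pow (q t : ℂ) (L : ℕ) (m : Fin k → Fin L) :
    ((Matrix.of fun (i : Fin k) (m : Fin L) => (q ^ (i : ℕ) * t) ^ (m : ℕ)).submatrix id m).det =
      t ^ (∑ i, (m i : ℕ)) * (vandermonde fun i => q ^ (m i : ℕ)).det := by
  rw [← Finset.prod_pow_eq_pow_sum, ← det_transpose (vandermonde _), ← Matrix.det_mul_row]
  congr 1
  ext i j
  simp only [submatrix_apply, of_apply, id, transpose_apply, vandermonde_apply, mul_pow]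
  rw [← pow_mul, ← pow_mul, mul_comm (i : ℕ), mul_comm]

lemma det_of_mul_pow_rev (q s : ℂ) (L : ℕ) (m : Fin k → Fin L) :
    ((Matrix.of fun (m : Fin L) (j : Fin k) =>
      (q ^ (j : ℕ) * s) ^ (L - 1 - (m : ℕ))).submatrix m id).det =
      s ^ (∑ i, (L - 1 - (m i : ℕ))) * (vandermonde fun i => q ^ (L - 1 - (m i : ℕ))).det := by
  rw [← Finset.prod_pow_eq_pow_sum, ← Matrix.det_mul_column]
  congr 1
  ext i j
  simp only [submatrix_apply, of_apply, id, vandermonde_apply, mul_pow]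
  rw [← pow_mul, ← pow_mul, mul_comm (j : ℕ), mul_comm]

lemma det_vandermonde_geometric (q t : ℂ) :
    (vandermonde fun i : Fin k => q ^ (i : ℕ) * t).det =
      t ^ (∑ i : Fin k, (i : ℕ)) * (vandermonde fun i : Fin k => q ^ (i : ℕ)).det := by
  rw [← Finset.prod_pow_eq_pow_sum, ← Matrix.det_mul_row]
  congr 1
  ext i j
  simp only [of_apply, vandermonde_apply, mul_pow]
  ring

lemma tendsto_det_vandermonde_pow_div (x : Fin k → ℕ) :
    Tendsto (fun q : ℂ => (vandermonde fun i => q ^ x i).det /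
      (q - 1) ^ (∑ i : Fin k, (Finset.Ioi i).card)) (𝓝[≠] 1)
      (𝓝 (vandermonde fun i => (x i : ℂ)).det) := by
  have hone (n : ℕ) : Tendsto (fun q : ℂ => (q ^ n - 1) / (q - 1)) (𝓝[≠] 1) (𝓝 (n : ℂ)) := by
    have h := (hasDerivAt_pow n (1 : ℂ)).tendsto_slope
    simp only [one_pow, mul_one] at h
    refine h.congr fun q => ?_
    simp [slope_def_field]
  have hlim : Tendsto (fun q : ℂ => ∏ i : Fin k, ∏ j ∈ Finset.Ioi i,
      ((q ^ x j - 1) / (q - 1) - (q ^ x i - 1) / (q - 1))) (𝓝[≠] 1)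
      (𝓝 (∏ i : Fin k, ∏ j ∈ Finset.Ioi i, ((x j : ℂ) - x i))) :=
    tendsto_finsetProd _ fun i _ => tendsto_finsetProd _ fun j _ => (hone _).sub (hone _)
  rw [Matrix.det_vandermonde]
  refine hlim.congr fun q => ?_
  rw [Matrix.det_vandermonde, ← Finset.prod_pow_eq_pow_sum, ← Finset.prod_div_distrib]
  refine Finset.prod_congr rfl fun i _ => ?_
  rw [← Finset.prod_const, ← Finset.prod_div_distrib]
  refine Finset.prod_congr rfl fun j _ => ?_
  rw [← sub_div]
  congr 1
  ring

lemma continuous_integral_charProduct {R : ℕ} (μ : Measure (Matrix.unitaryGroup (Fin R) ℂ))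
    [IsProbabilityMeasure μ] {ι : Type*} [Fintype ι] {a : ℂ → ι → ℂ}
    (ha : ∀ i, Continuous fun q => a q i) :
    Continuous fun q => ∫ θ, charProduct k (a q) (θ : Matrix (Fin R) (Fin R) ℂ) ∂μ := by
  have hcont : Continuous fun p : ℂ × Matrix.unitaryGroup (Fin R) ℂ =>
      charProduct k (a p.1) (p.2 : Matrix (Fin R) (Fin R) ℂ) := by
    refine Continuous.mul (((continuous_subtype_val.comp continuous_snd).matrix_det.inv₀
      fun p => (isUnit_det_unitary p.2).ne_zero).pow k) (continuous_finsetProd _ fun i _ => ?_)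
    exact (continuous_const.add (((ha i).comp continuous_fst).smul
      (continuous_subtype_val.comp continuous_snd))).matrix_det
  have := continuous_parametric_integral_of_continuous (μ := μ) (s := Set.univ)
    (f := fun q θ => charProduct k (a q) (θ : Matrix (Fin R) (Fin R) ℂ)) hcont
    isCompact_univ
  simpa using this

lemma eventually_injective_append_geometric {s t : ℂ} (hst : s ≠ t) (hs : s ≠ 0) (ht : t ≠ 0) :
    ∀ᶠ q : ℂ in 𝓝[≠] 1, Function.Injective (Fin.append (fun j : Fin k => q ^ (j : ℕ) * s)
      (fun i : Fin k => q ^ (i : ℕ) * t)) := by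
  have hne (i j : ℕ) (hij : i ≠ j) : ∀ᶠ q : ℂ in 𝓝[≠] 1, q ^ i ≠ q ^ j := by
    wlog hlt : i < j generalizing i j
    · filter_upwards [this j i hij.symm (by omega)] with q hq using hq.symm
    have h := (hasDerivAt_pow (j - i) (1 : ℂ)).eventually_ne (c := 1) (by
      simp only [one_pow, mul_one]
      exact_mod_cast (by omega : j - i ≠ 0))
    have h0 : ∀ᶠ q : ℂ in 𝓝[≠] 1, q ≠ 0 :=
      mem_nhdsWithin_of_mem_nhds (isOpen_ne.mem_nhds one_ne_zero)
    filter_upwards [h, h0] with q hq hq0 heq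
    refine hq (mul_left_cancel₀ (pow_ne_zero i hq0) ?_)
    rw [← pow_add, mul_one, heq]
    congr 1
    omega
  have hcross (i j : ℕ) : ∀ᶠ q : ℂ in 𝓝[≠] 1, q ^ i * s ≠ q ^ j * t := by
    refine mem_nhdsWithin_of_mem_nhds (IsOpen.mem_nhds (isOpen_ne_fun (by fun_prop) (by fun_prop)) ?_)
    simpa using hst
  have h1 : ∀ᶠ q : ℂ in 𝓝[≠] 1, ∀ i j : Fin k, i ≠ j → q ^ (i : ℕ) ≠ q ^ (j : ℕ) :=
    eventually_all.2 fun i => eventually_all.2 fun j => eventually_imp_distrib_left.2 fun hij =>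
      hne i j fun h => hij (Fin.ext h)
  have h2 : ∀ᶠ q : ℂ in 𝓝[≠] 1, ∀ i j : Fin k, q ^ (i : ℕ) * s ≠ q ^ (j : ℕ) * t :=
    eventually_all.2 fun i => eventually_all.2 fun j => hcross i j
  filter_upwards [h1, h2] with q hq1 hq2 
  have hinj (u : ℂ) (hu : u ≠ 0) : Function.Injective fun i : Fin k => q ^ (i : ℕ) * u :=
    fun i j hij => by
      by_contra hne
      exact hq1 i j hne (mul_right_cancel₀ hu hij)
  exact Fin.append_injective_iff.2 ⟨hinj s hs, hinj t ht, fun i j => hq2 i j⟩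

lemma factorial_mul_integral_charProduct_confluent {R : ℕ}
    (μ : Measure (Matrix.unitaryGroup (Fin R) ℂ)) [IsProbabilityMeasure μ] [μ.IsHaarMeasure]
    {s t : ℂ} (hst : s ≠ t) (hs : s ≠ 0) (ht : t ≠ 0) :
    (k.factorial : ℂ) * ((∫ θ, charProduct k (Fin.append (fun _ : Fin k => s) fun _ : Fin k => t)
        (θ : Matrix (Fin R) (Fin R) ℂ) ∂μ) *
      (((Equiv.Perm.sign (Fin.revPerm : Equiv.Perm (Fin k)) : ℤ) : ℂ) *
        (t ^ (∑ i : Fin k, (i : ℕ)) * (vandermonde fun i : Fin k => ((i : ℕ) : ℂ)).det) *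
        (s ^ (∑ i : Fin k, (i : ℕ)) * (vandermonde fun i : Fin k => ((i : ℕ) : ℂ)).det))) =
      ∑ m : Fin k → Fin (R + k),
        (t ^ (∑ i, (m i : ℕ)) * (vandermonde fun i => ((m i : ℕ) : ℂ)).det) *
        (s ^ (∑ i, (R + k - 1 - (m i : ℕ))) *
          (vandermonde fun i => ((R + k - 1 - (m i : ℕ) : ℕ) : ℂ)).det) := by
  set E := ∑ i : Fin k, (Finset.Ioi i).card with hE
  have hcont := continuous_integral_charProduct (k := k) μ
    (a := fun q => Fin.append (fun j : Fin k => q ^ (j : ℕ) * s) fun i : Fin k => q ^ (i : ℕ) * t)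
    (fun i => by
      refine Fin.addCases (fun j => ?_) (fun j => ?_) i
      · simp only [Fin.append_left]; fun_prop
      · simp only [Fin.append_right]; fun_prop)
  have hG := (hcont.tendsto 1).mono_left (nhdsWithin_le_nhds (s := {1}ᶜ))
  simp only [one_pow, one_mul] at hG
  have hΔ := tendsto_det_vandermonde_pow_div (k := k) (fun i => (i : ℕ))
  have hL := (hG.mul (((hΔ.const_mul (t ^ (∑ i : Fin k, (i : ℕ)))).const_mul
    ((Equiv.Perm.sign (Fin.revPerm : Equiv.Perm (Fin k)) : ℤ) : ℂ)).mul
    (hΔ.const_mul (s ^ (∑ i : Fin k, (i : ℕ)))))).const_mul (k.factorial : ℂ)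
  have hR := tendsto_finsetSum (Finset.univ : Finset (Fin k → Fin (R + k))) fun m _ =>
    ((tendsto_det_vandermonde_pow_div (fun i => (m i : ℕ))).const_mul
      (t ^ (∑ i, (m i : ℕ)))).mul ((tendsto_det_vandermonde_pow_div
        (fun i => R + k - 1 - (m i : ℕ))).const_mul (s ^ (∑ i, (R + k - 1 - (m i : ℕ)))))
  refine tendsto_nhds_unique (hL.congr' ?_) hR
  filter_upwards [eventually_injective_append_geometric (k := k) hst hs ht] with q hq
  have h1 := integral_charProduct_append_mul μ hq
  have h2 := factorial_mul_det_mul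
    (Matrix.of fun (i : Fin k) (m : Fin (R + k)) => (q ^ (i : ℕ) * t) ^ (m : ℕ))
    (Matrix.of fun (m : Fin (R + k)) (j : Fin k) => (q ^ (j : ℕ) * s) ^ (R + k - 1 - (m : ℕ)))
  simp only [det_of_mul_pow, det_of_mul_pow_rev] at h2
  rw [geomKernel] at h1
  rw [← h1, det_vandermonde_geometric, det_vandermonde_geometric] at h2
  have h3 := congrArg (fun z => z / ((q - 1) ^ E * (q - 1) ^ E)) h2
  simp only [Finset.sum_div] at h3
  refine Eq.trans ?_ (h3.trans (Finset.sum_congr rfl fun m _ => ?_)) <;> simp only [div_eq_mul_inv, mul_inv] <;> ring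

end Confluence

section LatticeFormula

open Matrix

variable {R : ℕ}

lemma sum_antidiagonalTuple_prod_coeff (p : ℂ[X]) (k n : ℕ) :
    ∑ x ∈ Finset.Nat.antidiagonalTuple k n, ∏ i, p.coeff (x i) = (p ^ k).coeff n := by
  have h := PowerSeries.coeff_prod (fun _ : Fin k => (p : PowerSeries ℂ)) n Finset.univ
  rw [Finset.prod_const, Finset.card_univ, Fintype.card_fin, ← coe_pow, coeff_coe] at h
  rw [h]
  refine (Finset.sum_equiv Finsupp.equivFunOnFinite (fun x => ?_) fun x _ => ?_).symm
  · simp [Finset.mem_finsuppAntidiag, Finset.Nat.mem_antidiagonalTuple]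
  · simp

lemma map_conj_revCharpoly (θ : Matrix.unitaryGroup (Fin R) ℂ) :
    (revCharpoly (θ : Matrix (Fin R) (Fin R) ℂ)).map (starRingEnd ℂ) =
      C (θ : Matrix (Fin R) (Fin R) ℂ).det⁻¹ *
        reflect R (revCharpoly (θ : Matrix (Fin R) (Fin R) ℂ)) := by
  set A : Matrix (Fin R) (Fin R) ℂ := (θ : Matrix (Fin R) (Fin R) ℂ) with hA
  have hmap : (revCharpoly A).map (starRingEnd ℂ) = revCharpoly (A.map (starRingEnd ℂ)) := by
    rw [revCharpoly, revCharpoly, ← coe_mapRingHom, RingHom.map_det]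
    congr 1
    ext i j : 2
    simp [Matrix.one_apply, apply_ite]
  have hstar : A.map (starRingEnd ℂ) = (star A)ᵀ := by
    ext i j
    simp [Matrix.star_apply]
  have hunit : A * star A = 1 := Matrix.mem_unitaryGroup_iff.1 θ.2
  have hdet : A.det ≠ 0 := (isUnit_det_unitary θ).ne_zero
  refine mul_left_cancel₀ X_ne_zero (Polynomial.funext fun z => ?_)
  rcases eq_or_ne z 0 with rfl | hz
  · simp
  let _ : Invertible z⁻¹ := invertibleOfNonzero (inv_ne_zero hz)
  have h1 := eval₂_reflect_mul_pow (RingHom.id ℂ) z⁻¹ R (revCharpoly A) (natDegree_revCharpoly_le A)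
  simp only [invOf_eq_inv, inv_inv, inv_pow] at h1
  change (reflect R (revCharpoly A)).eval z * (z ^ R)⁻¹ = (revCharpoly A).eval z⁻¹ at h1
  have h2 : (reflect R (revCharpoly A)).eval z = z ^ R * (revCharpoly A).eval z⁻¹ := by
    rw [← h1]
    field_simp
  rw [eval_mul, eval_mul, eval_mul, eval_C, h2, hmap, hstar, eval_revCharpoly, eval_revCharpoly]
  congr 1
  have h3 : (1 + z • (star A)ᵀ).det = (1 + z • star A).det := by
    rw [← det_transpose]
    simp
  have h4 : A.det * (1 + z • star A).det = z ^ R * (1 + z⁻¹ • A).det := by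
    have := Matrix.det_smul (1 + z⁻¹ • A) z
    rw [Fintype.card_fin] at this
    rw [← det_mul, ← this, mul_add, mul_one, Matrix.mul_smul, hunit, smul_add, smul_inv_smul₀ hz,
      add_comm]
  rw [h3, ← h4, inv_mul_cancel_left₀ hdet]

lemma reflect_pow {p : ℂ[X]} {N : ℕ} (hp : p.natDegree ≤ N) (k : ℕ) :
    reflect (k * N) (p ^ k) = reflect N p ^ k := by
  induction k with
  | zero => simp [reflect_one]
  | succ k ih =>
    rw [pow_succ, pow_succ, ← ih, add_mul, one_mul,
      reflect_mul _ _ (natDegree_pow_le_of_le k hp) hp]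

lemma conj_coeff_revCharpoly_pow (θ : Matrix.unitaryGroup (Fin R) ℂ) {k n : ℕ} (hn : n ≤ k * R) :
    starRingEnd ℂ ((revCharpoly (θ : Matrix (Fin R) (Fin R) ℂ) ^ k).coeff n) =
      ((θ : Matrix (Fin R) (Fin R) ℂ).det)⁻¹ ^ k *
        (revCharpoly (θ : Matrix (Fin R) (Fin R) ℂ) ^ k).coeff (k * R - n) := by
  rw [← coeff_map, Polynomial.map_pow, map_conj_revCharpoly, mul_pow, ← C_pow, coeff_C_mul,
    ← reflect_pow (natDegree_revCharpoly_le _), coeff_reflect, revAt_le hn]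

/-- The mixed moments `∫ det(θ)⁻ᵏ [T^x] det(1 + Tθ)ᵏ [T^y] det(1 + Tθ)ᵏ dθ`. -/
noncomputable def twistedMoment (k : ℕ) (μ : Measure (Matrix.unitaryGroup (Fin R) ℂ))
    (x y : ℕ) : ℂ :=
  ∫ θ, ((θ : Matrix (Fin R) (Fin R) ℂ).det)⁻¹ ^ k *
    ((revCharpoly (θ : Matrix (Fin R) (Fin R) ℂ) ^ k).coeff x *
      (revCharpoly (θ : Matrix (Fin R) (Fin R) ℂ) ^ k).coeff y) ∂μ

lemma continuous_coeff_revCharpoly_pow (k j : ℕ) :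
    Continuous fun θ : Matrix.unitaryGroup (Fin R) ℂ =>
      (revCharpoly (θ : Matrix (Fin R) (Fin R) ℂ) ^ k).coeff j := by
  simpa using continuous_coeff_prod (Finset.univ : Finset (Fin k))
    (f := fun _ (θ : Matrix.unitaryGroup (Fin R) ℂ) => revCharpoly (θ : Matrix (Fin R) (Fin R) ℂ))
    (fun _ j => continuous_coeff_revCharpoly j) j

lemma matrixIntegral_eq_twistedMoment {k n : ℕ} (hn : n ≤ k * R)
    (μ : Measure (Matrix.unitaryGroup (Fin R) ℂ)) :
    (matrixIntegral k n R μ : ℂ) = twistedMoment k μ (k * R - n) n := by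
  rw [matrixIntegral, twistedMoment, ← integral_complex_ofReal]
  refine integral_congr_ae (Filter.Eventually.of_forall fun θ => ?_)
  dsimp only
  rw [← mul_assoc, ← conj_coeff_revCharpoly_pow θ hn, ← Complex.normSq_eq_conj_mul_self,
    Complex.normSq_eq_norm_sq, ← sum_antidiagonalTuple_prod_coeff]
  rfl

lemma integral_charProduct_append_const (k : ℕ) (μ : Measure (Matrix.unitaryGroup (Fin R) ℂ))
    [IsProbabilityMeasure μ] (s t : ℂ) :
    ∫ θ, charProduct k (Fin.append (fun _ : Fin k => s) fun _ : Fin k => t)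
        (θ : Matrix (Fin R) (Fin R) ℂ) ∂μ =
      ∑ p : Fin (k * R + 1) × Fin (k * R + 1),
        twistedMoment k μ p.1 p.2 * (s ^ (p.1 : ℕ) * t ^ (p.2 : ℕ)) := by
  have heval (A : Matrix (Fin R) (Fin R) ℂ) (z : ℂ) : (1 + z • A).det ^ k =
      ∑ x : Fin (k * R + 1), (revCharpoly A ^ k).coeff x * z ^ (x : ℕ) := by
    rw [← eval_revCharpoly, ← eval_pow, eval_eq_sum_range'
      (Nat.lt_succ_of_le (natDegree_pow_le_of_le k (natDegree_revCharpoly_le A))),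
      Fin.sum_univ_eq_sum_range fun x => (revCharpoly A ^ k).coeff x * z ^ x]
  have hpt (θ : Matrix.unitaryGroup (Fin R) ℂ) :
      charProduct k (Fin.append (fun _ : Fin k => s) fun _ : Fin k => t)
        (θ : Matrix (Fin R) (Fin R) ℂ) = ∑ p : Fin (k * R + 1) × Fin (k * R + 1),
        ((θ : Matrix (Fin R) (Fin R) ℂ).det)⁻¹ ^ k *
          ((revCharpoly (θ : Matrix (Fin R) (Fin R) ℂ) ^ k).coeff p.1 *
          (revCharpoly (θ : Matrix (Fin R) (Fin R) ℂ) ^ k).coeff p.2) *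
          (s ^ (p.1 : ℕ) * t ^ (p.2 : ℕ)) := by
    rw [charProduct, Fin.prod_univ_add]
    simp only [Fin.append_left, Fin.append_right, Finset.prod_const, Finset.card_univ,
      Fintype.card_fin]
    rw [heval, heval, Finset.sum_mul_sum, Finset.mul_sum, Fintype.sum_prod_type]
    refine Finset.sum_congr rfl fun x _ => ?_
    rw [Finset.mul_sum]
    refine Finset.sum_congr rfl fun y _ => ?_
    ring
  simp only [hpt]
  rw [integral_finsetSum]
  · simp only [integral_mul_const, twistedMoment]
  · intro p _
    exact (((continuous_det_inv_pow k).mul ((continuous_coeff_revCharpoly_pow k _).mul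
      (continuous_coeff_revCharpoly_pow k _))).mul continuous_const).integrable_unitaryGroup μ

lemma factorial_mul_twistedMoment (k : ℕ) (μ : Measure (Matrix.unitaryGroup (Fin R) ℂ))
    [IsProbabilityMeasure μ] [μ.IsHaarMeasure] {n : ℕ} (hn : n ≤ k * R) :
    (k.factorial : ℂ) * (twistedMoment k μ (k * R - n) n *
      (((Equiv.Perm.sign (Fin.revPerm : Equiv.Perm (Fin k)) : ℤ) : ℂ) *
        (vandermonde fun i : Fin k => ((i : ℕ) : ℂ)).det ^ 2)) =
      ∑ m : Fin k → Fin (R + k) with ∑ i, (m i : ℕ) = n + ∑ i : Fin k, (i : ℕ),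
        (vandermonde fun i => ((m i : ℕ) : ℂ)).det *
          (vandermonde fun i => ((R + k - 1 - (m i : ℕ) : ℕ) : ℂ)).det := by
  classical
  set e := ∑ i : Fin k, (i : ℕ) with he
  set Δ := (vandermonde fun i : Fin k => ((i : ℕ) : ℂ)).det
  set ε := ((Equiv.Perm.sign (Fin.revPerm : Equiv.Perm (Fin k)) : ℤ) : ℂ)
  have h := sum_filter_eq_of_forall_sum_mul_prod_pow (N := 2)
    (fun p : Fin (k * R + 1) × Fin (k * R + 1) =>
      (k.factorial : ℂ) * (twistedMoment k μ p.1 p.2 * (ε * Δ ^ 2)))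
    (fun p => ![(p.1 : ℕ) + e, (p.2 : ℕ) + e])
    (fun m : Fin k → Fin (R + k) => (vandermonde fun i => ((m i : ℕ) : ℂ)).det *
          (vandermonde fun i => ((R + k - 1 - (m i : ℕ) : ℕ) : ℂ)).det)
    (fun m => ![∑ i, (R + k - 1 - (m i : ℕ)), ∑ i, (m i : ℕ)])
    (fun a ha _ ha0 => by
      have h1 := factorial_mul_integral_charProduct_confluent (k := k) μ
        (ha.ne (by decide : (0 : Fin 2) ≠ 1)) (ha0 0) (ha0 1)
      rw [integral_charProduct_append_const, Finset.sum_mul, Finset.mul_sum] at h1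
      simp only [Fin.prod_univ_two, Matrix.cons_val_zero, Matrix.cons_val_one]
      refine Eq.trans ?_ (h1.trans ?_)
      · refine Finset.sum_congr rfl fun p _ => ?_
        rw [pow_add, pow_add]
        ring
      · refine Finset.sum_congr rfl fun m _ => ?_
        ring)
    ![k * R - n + e, n + e]
  have he2 : e * 2 = k * (k - 1) := by
    rw [he, Fin.sum_univ_eq_sum_range (fun i => i), Finset.sum_range_id_mul_two]
  have hsum (m : Fin k → Fin (R + k)) :
      ∑ i, (R + k - 1 - (m i : ℕ)) + ∑ i, (m i : ℕ) = k * R + e * 2 := by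
    rw [← Finset.sum_add_distrib, he2, ← mul_add]
    rw [Finset.sum_congr rfl fun i _ => (by
      have := (m i).isLt
      have := i.isLt
      omega : R + k - 1 - (m i : ℕ) + m i = R + (k - 1))]
    simp
  have hL : (Finset.univ.filter fun p : Fin (k * R + 1) × Fin (k * R + 1) =>
      ![(p.1 : ℕ) + e, (p.2 : ℕ) + e] = ![k * R - n + e, n + e]) =
      {(⟨k * R - n, by omega⟩, ⟨n, by omega⟩)} := by
    ext ⟨x, y⟩
    simp [Prod.ext_iff, Fin.ext_iff]
  rw [hL, Finset.sum_singleton] at h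
  rw [h]
  refine Finset.sum_congr (Finset.filter_congr fun m _ => ?_) fun _ _ => rfl
  have := hsum m
  simp only [vecCons_inj, and_true]
  constructor
  · exact fun h => h.2
  · intro h
    exact ⟨by omega, h⟩

lemma det_vandermonde_natCast (k : ℕ) :
    (vandermonde fun i : Fin k => ((i : ℕ) : ℂ)).det =
      ((∏ i ∈ Finset.range k, (Nat.factorial i : ℝ) : ℝ) : ℂ) := by
  rcases k with _ | k
  · simp
  · rw [det_vandermonde_id_eq_superFactorial, ← Nat.prod_range_succ_factorial]
    push_cast
    rfl

lemma det_vandermonde_sq {k : ℕ} (x : Fin k → ℝ) :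
    (vandermonde fun i => (x i : ℂ)).det ^ 2 =
      ((∏ p ∈ Finset.univ.filter (fun p : Fin k × Fin k => p.1 < p.2),
        (x p.1 - x p.2) ^ 2 : ℝ) : ℂ) := by
  rw [det_vandermonde, Finset.prod_filter, Fintype.prod_prod_type, ← Finset.prod_pow]
  push_cast
  refine Finset.prod_congr rfl fun i _ => ?_
  rw [← Finset.prod_pow, ← Finset.filter_lt_eq_Ioi, Finset.prod_filter]
  refine Finset.prod_congr rfl fun j _ => ?_
  split_ifs
  · push_cast
    ring
  · simp

lemma det_vandermonde_const_sub {k : ℕ} (c : ℂ) (x : Fin k → ℂ) :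
    (vandermonde fun i => c - x i).det =
      (∏ i : Fin k, ∏ _j ∈ Finset.Ioi i, (-1 : ℂ)) * (vandermonde x).det := by
  rw [det_vandermonde, det_vandermonde, ← Finset.prod_mul_distrib]
  refine Finset.prod_congr rfl fun i _ => ?_
  rw [← Finset.prod_mul_distrib]
  exact Finset.prod_congr rfl fun j _ => by ring

/-- The matrix integral is a sum of squared Vandermonde products over lattice points. -/
lemma matrixIntegral_eq_latticeSum (k : ℕ) (μ : Measure (Matrix.unitaryGroup (Fin R) ℂ))
    [IsProbabilityMeasure μ] [μ.IsHaarMeasure] {n : ℕ} (hn : n ≤ k * R) :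
    matrixIntegral k n R μ =
      (1 / ((k.factorial : ℝ) * (∏ i ∈ Finset.range k, (Nat.factorial i : ℝ)) ^ 2)) *
      ∑ m : Fin k → Fin (R + k) with ∑ i, (m i : ℕ) = n + ∑ i : Fin k, (i : ℕ),
        ∏ p ∈ Finset.univ.filter (fun p : Fin k × Fin k => p.1 < p.2),
          (((m p.1 : ℕ) : ℝ) - ((m p.2 : ℕ) : ℝ)) ^ 2 := by
  have h := factorial_mul_twistedMoment k μ hn
  rw [← matrixIntegral_eq_twistedMoment hn, det_vandermonde_natCast] at h
  have hterm (m : Fin k → Fin (R + k)) : (vandermonde fun i => ((m i : ℕ) : ℂ)).det *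
      (vandermonde fun i => ((R + k - 1 - (m i : ℕ) : ℕ) : ℂ)).det =
      (∏ i : Fin k, ∏ _j ∈ Finset.Ioi i, (-1 : ℂ)) *
        ((∏ p ∈ Finset.univ.filter (fun p : Fin k × Fin k => p.1 < p.2),
          (((m p.1 : ℕ) : ℝ) - ((m p.2 : ℕ) : ℝ)) ^ 2 : ℝ) : ℂ) := by
    have h1 : (fun i => ((R + k - 1 - (m i : ℕ) : ℕ) : ℂ)) =
        fun i => ((R + k - 1 : ℕ) : ℂ) - ((m i : ℕ) : ℂ) := by
      funext i
      exact Nat.cast_sub (by have := (m i).isLt; omega)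
    rw [h1, det_vandermonde_const_sub, ← det_vandermonde_sq fun i => ((m i : ℕ) : ℝ)]
    simp only [Complex.ofReal_natCast]
    ring
  simp only [hterm] at h
  rw [← Finset.mul_sum, ← Complex.ofReal_sum] at h
  have hnorm := congrArg norm h
  have hM : 0 ≤ matrixIntegral k n R μ := integral_nonneg fun θ => by positivity
  have hsign : ‖((Equiv.Perm.sign (Fin.revPerm : Equiv.Perm (Fin k)) : ℤ) : ℂ)‖ = 1 := by
    rcases Int.units_eq_one_or (Equiv.Perm.sign (Fin.revPerm : Equiv.Perm (Fin k))) with h | h <;>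
      simp [h]
  have hP : 0 < ∏ i ∈ Finset.range k, (Nat.factorial i : ℝ) :=
    Finset.prod_pos fun i _ => by exact_mod_cast i.factorial_pos
  have hk : (0 : ℝ) < k.factorial := by exact_mod_cast k.factorial_pos
  simp only [norm_mul, norm_pow, norm_prod, norm_neg, norm_one, Finset.prod_const_one, one_mul,
    hsign, RCLike.norm_natCast] at hnorm
  rw [Complex.norm_of_nonneg hM, Complex.norm_of_nonneg hP.le, Complex.norm_of_nonneg
    (Finset.sum_nonneg fun m _ => Finset.prod_nonneg fun p _ => sq_nonneg _)] at hnorm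
  rw [← hnorm]
  field_simp

end LatticeFormula

section Asymptotics

/-- The squared Vandermonde product `∏_{i<j} (xᵢ - xⱼ)²`. -/
noncomputable def vandermondeSq {k : ℕ} (x : Fin k → ℝ) : ℝ :=
  ∏ p ∈ Finset.univ.filter (fun p : Fin k × Fin k => p.1 < p.2), (x p.1 - x p.2) ^ 2

lemma card_filter_fst_lt_snd (k : ℕ) :
    2 * (Finset.univ.filter (fun p : Fin k × Fin k => p.1 < p.2)).card = k * (k - 1) := by
  have h : (Finset.univ.filter (fun p : Fin k × Fin k => p.1 < p.2)).card =
      ∑ i : Fin k, (Finset.Ioi i).card := by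
    simp only [Finset.card_filter, Fintype.sum_prod_type, ← Finset.filter_lt_eq_Ioi]
  rw [h, ← Finset.sum_range_id_mul_two, mul_comm, ← Finset.sum_range_reflect]
  simp only [Fin.card_Ioi]
  rw [Fin.sum_univ_eq_sum_range fun i => k - 1 - i]

lemma mul_abs_prod_sub_prod_le {ι : Type*} (s : Finset ι) {a b : ι → ℝ} {A δ : ℝ}
    (ha : ∀ i ∈ s, |a i| ≤ A) (hb : ∀ i ∈ s, |b i| ≤ A) (hab : ∀ i ∈ s, |a i - b i| ≤ δ)
    (hA : 0 ≤ A) : A * |∏ i ∈ s, a i - ∏ i ∈ s, b i| ≤ s.card * A ^ s.card * δ := by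
  classical
  induction s using Finset.induction_on with
  | empty => simp
  | insert i s hi ih =>
    have ih' := ih (fun j hj => ha j (Finset.mem_insert_of_mem hj))
      (fun j hj => hb j (Finset.mem_insert_of_mem hj))
      (fun j hj => hab j (Finset.mem_insert_of_mem hj))
    have hai := ha i (Finset.mem_insert_self i s)
    have habi := hab i (Finset.mem_insert_self i s)
    have hprod : |∏ j ∈ s, b j| ≤ A ^ s.card := by
      rw [Finset.abs_prod]
      exact (Finset.prod_le_prod (fun j _ => abs_nonneg _)
        fun j hj => hb j (Finset.mem_insert_of_mem hj)).trans_eq (Finset.prod_const A)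
    rw [Finset.prod_insert hi, Finset.prod_insert hi, Finset.card_insert_of_notMem hi]
    have hsplit : a i * ∏ j ∈ s, a j - b i * ∏ j ∈ s, b j =
        a i * (∏ j ∈ s, a j - ∏ j ∈ s, b j) + (a i - b i) * ∏ j ∈ s, b j := by ring
    have h1 : |a i * ∏ j ∈ s, a j - b i * ∏ j ∈ s, b j| ≤
        A * |∏ j ∈ s, a j - ∏ j ∈ s, b j| + δ * A ^ s.card := by
      rw [hsplit]
      refine (abs_add_le _ _).trans ?_
      rw [abs_mul, abs_mul]
      have := (abs_nonneg _).trans habi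
      gcongr
    calc A * |a i * ∏ j ∈ s, a j - b i * ∏ j ∈ s, b j|
        ≤ A * (s.card * A ^ s.card * δ + δ * A ^ s.card) := by
          gcongr
          linarith
      _ = ((s.card + 1 : ℕ) : ℝ) * A ^ (s.card + 1) * δ := by
          push_cast
          ring

variable {k : ℕ}

lemma abs_sub_le_two_mul {x : Fin k → ℝ} {M : ℝ} (hx : ∀ j, |x j| ≤ M) (i j : Fin k) :
    |x i - x j| ≤ 2 * M := by
  linarith [abs_sub (x i) (x j), hx i, hx j]

lemma abs_vandermondeSq_le {x : Fin k → ℝ} {M : ℝ} (hx : ∀ j, |x j| ≤ M) :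
    |vandermondeSq x| ≤ (2 * M) ^ (k * (k - 1)) := by
  rw [vandermondeSq, Finset.abs_prod, ← card_filter_fst_lt_snd, pow_mul, ← Finset.prod_const]
  refine Finset.prod_le_prod (fun j _ => abs_nonneg _) fun p _ => ?_
  rw [abs_pow]
  exact pow_le_pow_left₀ (abs_nonneg _) (abs_sub_le_two_mul hx _ _) 2

lemma mul_abs_vandermondeSq_sub_le {x y : Fin k → ℝ} {M K : ℝ} (hM : 0 < M)
    (hx : ∀ j, |x j| ≤ M) (hy : ∀ j, |y j| ≤ M) (hxy : ∀ j, |x j - y j| ≤ K) (hK : 0 ≤ K) :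
    M * |vandermondeSq x - vandermondeSq y| ≤ 2 * K * k ^ 2 * (2 * M) ^ (k * (k - 1)) := by
  set s := Finset.univ.filter (fun p : Fin k × Fin k => p.1 < p.2) with hs
  have h := mul_abs_prod_sub_prod_le s (a := fun p => (x p.1 - x p.2) ^ 2)
    (b := fun p => (y p.1 - y p.2) ^ 2) (A := (2 * M) ^ 2) (δ := 2 * K * (4 * M))
    (fun p _ => by
      rw [abs_pow]
      exact pow_le_pow_left₀ (abs_nonneg _) (abs_sub_le_two_mul hx _ _) 2)
    (fun p _ => by
      rw [abs_pow]
      exact pow_le_pow_left₀ (abs_nonneg _) (abs_sub_le_two_mul hy _ _) 2)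
    (fun p _ => by
      have h1 : (x p.1 - x p.2) ^ 2 - (y p.1 - y p.2) ^ 2 =
          ((x p.1 - y p.1) - (x p.2 - y p.2)) * ((x p.1 - x p.2) + (y p.1 - y p.2)) := by ring
      rw [h1, abs_mul]
      have h2 := abs_sub_le_two_mul hxy p.1 p.2
      have h3 : |(x p.1 - x p.2) + (y p.1 - y p.2)| ≤ 4 * M := by
        linarith [abs_add_le (x p.1 - x p.2) (y p.1 - y p.2), abs_sub_le_two_mul hx p.1 p.2,
          abs_sub_le_two_mul hy p.1 p.2]
      gcongr)
    (by positivity)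
  rw [← pow_mul, card_filter_fst_lt_snd] at h
  have hcard : (s.card : ℝ) ≤ k ^ 2 := by
    have := Finset.card_le_univ s
    rw [Fintype.card_prod, Fintype.card_fin] at this
    rw [sq]
    exact_mod_cast this
  change (2 * M) ^ 2 * |vandermondeSq x - vandermondeSq y| ≤ _ at h
  have h4 : (s.card : ℝ) * (2 * M) ^ (k * (k - 1)) * (2 * K * (4 * M)) ≤
      k ^ 2 * (2 * M) ^ (k * (k - 1)) * (2 * K * (4 * M)) := by gcongr
  have h5 := h.trans h4
  refine le_of_mul_le_mul_left ?_ (by positivity : 0 < 4 * M)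
  linarith

variable {d : ℕ}

lemma wFull_castSucc (c : ℝ) (w : Fin d → ℝ) (i : Fin d) :
    wFull (d + 1) c w i.castSucc = w i := by
  simp [wFull]

lemma wFull_last (c : ℝ) (w : Fin d → ℝ) :
    wFull (d + 1) c w (Fin.last d) = c - ∑ i, w i := by
  simp [wFull]

lemma wFull_smul (r c : ℝ) (w : Fin d → ℝ) :
    wFull (d + 1) (r * c) (r • w) = r • wFull (d + 1) c w := by
  funext j
  refine Fin.lastCases ?_ (fun i => ?_) j
  · rw [Pi.smul_apply, wFull_last, wFull_last]
    simp [mul_sub, Finset.mul_sum]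
  · rw [Pi.smul_apply, wFull_castSucc, wFull_castSucc]
    simp

lemma continuous_wFull (c : ℝ) (j : Fin (d + 1)) :
    Continuous fun w : Fin d → ℝ => wFull (d + 1) c w j := by
  refine Fin.lastCases ?_ (fun i => ?_) j
  · simp only [wFull_last]
    fun_prop
  · simp only [wFull_castSucc]
    fun_prop

lemma vandermondeSq_smul (r : ℝ) (x : Fin k → ℝ) :
    vandermondeSq (r • x) = r ^ (k * (k - 1)) * vandermondeSq x := by
  rw [vandermondeSq, vandermondeSq, ← card_filter_fst_lt_snd, pow_mul, ← Finset.prod_const,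
    ← Finset.prod_mul_distrib]
  refine Finset.prod_congr rfl fun p _ => ?_
  simp only [Pi.smul_apply, smul_eq_mul]
  ring

/-- The points `y` for which all coordinates of `(y, c - ∑ y)` lie in `[0, r]`. -/
def scaledRegion (d : ℕ) (c r : ℝ) : Set (Fin d → ℝ) :=
  {y | ∀ j, wFull (d + 1) c y j ∈ Set.Icc 0 r}

lemma smul_mem_scaledRegion {r : ℝ} (hr : 0 < r) (c : ℝ) (w : Fin d → ℝ) :
    r • w ∈ scaledRegion d (r * c) r ↔ w ∈ Dregion (d + 1) c := by
  have h (x : ℝ) : r * x ∈ Set.Icc 0 r ↔ x ∈ Set.Icc (0 : ℝ) 1 := by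
    simp [hr]
  rw [scaledRegion, Set.mem_ofPred_eq, wFull_smul, Fin.forall_fin_succ']
  simp only [Pi.smul_apply, smul_eq_mul, h, wFull_castSucc, wFull_last]
  rfl

lemma isCompact_scaledRegion (c r : ℝ) : IsCompact (scaledRegion d c r) := by
  refine (isCompact_Icc (a := fun _ : Fin d => (0 : ℝ)) (b := fun _ => r)).of_isClosed_subset ?_ ?_
  · simp only [scaledRegion, Set.ofPred_forall]
    exact isClosed_iInter fun j => isClosed_Icc.preimage (continuous_wFull c j)
  · intro y hy
    have h (i : Fin d) := hy i.castSucc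
    simp only [wFull_castSucc] at h
    exact ⟨fun i => (h i).1, fun i => (h i).2⟩

lemma integrableOn_vandermondeSq (c r : ℝ) :
    IntegrableOn (fun y => vandermondeSq (wFull (d + 1) c y)) (scaledRegion d c r) := by
  refine ContinuousOn.integrableOn_compact (isCompact_scaledRegion c r)
    (Continuous.continuousOn ?_)
  exact continuous_finsetProd _ fun p _ => ((continuous_wFull c _).sub (continuous_wFull c _)).pow 2

lemma setIntegral_scaledRegion {r : ℝ} (hr : 0 < r) (c : ℝ) :
    ∫ y in scaledRegion d (r * c) r, vandermondeSq (wFull (d + 1) (r * c) y) =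
      r ^ ((d + 1) * d + d) * ∫ w in Dregion (d + 1) c, vandermondeSq (wFull (d + 1) c w) := by
  have hmeas : MeasurableSet (scaledRegion d (r * c) r) :=
    (isCompact_scaledRegion _ _).measurableSet
  have hpre : Dregion (d + 1) c = (fun w : Fin d → ℝ => r • w) ⁻¹' scaledRegion d (r * c) r := by
    ext w
    exact (smul_mem_scaledRegion hr c w).symm
  have hD : MeasurableSet (Dregion (d + 1) c) := by
    rw [hpre]
    exact hmeas.preimage (by fun_prop : Measurable fun w : Fin d → ℝ => r • w)
  have h := Measure.integral_comp_smul_of_nonneg (volume : Measure (Fin d → ℝ))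
    ((scaledRegion d (r * c) r).indicator fun y => vandermondeSq (wFull (d + 1) (r * c) y)) r
    (hR := hr.le)
  rw [integral_indicator hmeas, Module.finrank_fin_fun, smul_eq_mul] at h
  have h2 (w : Fin d → ℝ) : (scaledRegion d (r * c) r).indicator
      (fun y => vandermondeSq (wFull (d + 1) (r * c) y)) (r • w) =
      r ^ ((d + 1) * d) * (Dregion (d + 1) c).indicator
        (fun w => vandermondeSq (wFull (d + 1) c w)) w := by
    by_cases hw : w ∈ Dregion (d + 1) c
    · rw [Set.indicator_of_mem hw, Set.indicator_of_mem ((smul_mem_scaledRegion hr c w).2 hw),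
        wFull_smul, vandermondeSq_smul]
      rfl
    · rw [Set.indicator_of_notMem hw, Set.indicator_of_notMem
        (fun h => hw ((smul_mem_scaledRegion hr c w).1 h)), mul_zero]
  simp only [h2] at h
  rw [integral_const_mul] at h
  have h3 := integral_indicator (μ := volume) (f := fun w => vandermondeSq (wFull (d + 1) c w)) hD
  rw [← h3, pow_add, mul_comm (r ^ _), mul_assoc]
  refine Eq.trans ?_ (congrArg (fun z => r ^ d * z) h.symm)
  rw [mul_inv_cancel_left₀ (pow_ne_zero _ hr.ne')]

end Asymptotics

section LatticeComparison

variable {d : ℕ}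

/-- The points of the box `[-K, r + K]^d` for which the `j`-th coordinate of `(y, c - ∑ y)` is
within `K` of `b`. -/
def slab (d : ℕ) (c r K b : ℝ) (j : Fin (d + 1)) : Set (Fin d → ℝ) :=
  {y | (∀ i, y i ∈ Set.Icc (-K) (r + K)) ∧ wFull (d + 1) c y j ∈ Set.Icc (b - K) (b + K)}

lemma slab_subset_Icc (c r K b : ℝ) (j : Fin (d + 1)) :
    slab d c r K b j ⊆ Set.Icc (fun _ => -K) (fun _ => r + K) :=
  fun _ hy => ⟨fun i => (hy.1 i).1, fun i => (hy.1 i).2⟩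

lemma isClosed_slab (c r K b : ℝ) (j : Fin (d + 1)) : IsClosed (slab d c r K b j) := by
  have h : slab d c r K b j = Set.Icc (fun _ => -K) (fun _ => r + K) ∩
      (fun y => wFull (d + 1) c y j) ⁻¹' Set.Icc (b - K) (b + K) :=
    Set.Subset.antisymm (fun y hy => ⟨slab_subset_Icc c r K b j hy, hy.2⟩)
      fun y hy => ⟨fun i => ⟨hy.1.1 i, hy.1.2 i⟩, hy.2⟩
  rw [h]
  exact isClosed_Icc.inter (isClosed_Icc.preimage (continuous_wFull c j))

lemma mul_volume_real_update_Icc_le {r K b : ℝ} (hr : 0 ≤ r) (hK : 0 ≤ K) (i : Fin d) :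
    r * volume.real (Set.Icc (Function.update (fun _ : Fin d => -K) i (b - K))
      (Function.update (fun _ : Fin d => r + K) i (b + K))) ≤ 2 * K * (r + 2 * K) ^ d := by
  have hle : Function.update (fun _ : Fin d => -K) i (b - K) ≤
      Function.update (fun _ : Fin d => r + K) i (b + K) := by
    intro j
    rcases eq_or_ne j i with rfl | h
    · simp only [Function.update_self]
      linarith
    · simp only [Function.update_of_ne h]
      linarith
  rw [Measure.real, Real.volume_Icc_pi_toReal hle,
    ← Finset.mul_prod_erase Finset.univ _ (Finset.mem_univ i)]
  have h1 : ∏ x ∈ Finset.univ.erase i, (Function.update (fun _ : Fin d => r + K) i (b + K) x -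
      Function.update (fun _ : Fin d => -K) i (b - K) x) =
      ∏ x ∈ Finset.univ.erase i, (r + 2 * K) := by
    refine Finset.prod_congr rfl fun x hx => ?_
    rw [Function.update_of_ne (Finset.ne_of_mem_erase hx),
      Function.update_of_ne (Finset.ne_of_mem_erase hx)]
    ring
  have h2 : (r + 2 * K) ^ d = (r + 2 * K) * ∏ x ∈ Finset.univ.erase i, (r + 2 * K) := by
    rw [Finset.mul_prod_erase Finset.univ (fun _ => r + 2 * K) (Finset.mem_univ i)]
    simp
  rw [h1, h2, Function.update_self, Function.update_self]
  have hP : 0 ≤ ∏ x ∈ Finset.univ.erase i, (r + 2 * K) :=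
    Finset.prod_nonneg fun _ _ => by positivity
  nlinarith [mul_nonneg (mul_nonneg hK hK) hP]

lemma mul_volume_real_slab_le (hd : 0 < d) {c r K b : ℝ} (hr : 0 ≤ r) (hK : 0 ≤ K)
    (j : Fin (d + 1)) :
    r * volume.real (slab d c r K b j) ≤ 2 * K * (r + 2 * K) ^ d := by
  refine Fin.lastCases ?_ (fun i => ?_) j
  · set i : Fin d := ⟨0, hd⟩
    set M : Matrix (Fin d) (Fin d) ℝ :=
      (1 : Matrix (Fin d) (Fin d) ℝ).updateRow i (fun _ => 1) with hM
    have hrow : (fun _ => 1 : Fin d → ℝ) = ∑ l, (1 : ℝ) • (1 : Matrix (Fin d) (Fin d) ℝ) l := by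
      funext x
      rw [Finset.sum_apply]
      simp [Matrix.one_apply]
    have hdet : LinearMap.det (Matrix.toLin' M) = 1 := by
      rw [LinearMap.det_toLin', hM, hrow, Matrix.det_updateRow_sum]
      simp
    have hself (y : Fin d → ℝ) : Matrix.toLin' M y i = ∑ l, y l := by
      simp [M, Matrix.mulVec, dotProduct]
    have hne (y : Fin d → ℝ) (l : Fin d) (hl : l ≠ i) : Matrix.toLin' M y l = y l := by
      simp [M, Matrix.mulVec, dotProduct, Matrix.updateRow_ne hl, Matrix.one_apply]
    have hsub : slab d c r K b (Fin.last d) ⊆ Matrix.toLin' M ⁻¹'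
        Set.Icc (Function.update (fun _ : Fin d => -K) i (c - b - K))
          (Function.update (fun _ : Fin d => r + K) i (c - b + K)) := by
      rintro y ⟨hy, hy'⟩
      rw [wFull_last] at hy'
      refine ⟨fun l => ?_, fun l => ?_⟩ <;> rcases eq_or_ne l i with h | h
      · rw [h, Function.update_self, hself]
        linarith [hy'.2]
      · rw [Function.update_of_ne h, hne y l h]
        exact (hy l).1
      · rw [h, Function.update_self, hself]
        linarith [hy'.1]
      · rw [Function.update_of_ne h, hne y l h]
        exact (hy l).2
    have hvol := Measure.addHaar_preimage_linearMap (volume : Measure (Fin d → ℝ))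
      (f := Matrix.toLin' M) (by rw [hdet]; exact one_ne_zero)
      (Set.Icc (Function.update (fun _ : Fin d => -K) i (c - b - K))
          (Function.update (fun _ : Fin d => r + K) i (c - b + K)))
    rw [hdet, inv_one, abs_one, ENNReal.ofReal_one, one_mul] at hvol
    refine (mul_le_mul_of_nonneg_left ?_ hr).trans
      (mul_volume_real_update_Icc_le (b := c - b) hr hK i)
    rw [Measure.real, Measure.real, ← hvol]
    exact ENNReal.toReal_mono (by rw [hvol]; exact isCompact_Icc.measure_lt_top.ne)
      (measure_mono hsub)
  · refine (mul_le_mul_of_nonneg_left ?_ hr).trans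
      (mul_volume_real_update_Icc_le (b := b) hr hK i)
    refine measureReal_mono ?_ isCompact_Icc.measure_lt_top.ne
    rintro y ⟨hy, hy'⟩
    rw [wFull_castSucc] at hy'
    refine ⟨fun l => ?_, fun l => ?_⟩ <;> rcases eq_or_ne l i with h | h
    · rw [h, Function.update_self]
      exact hy'.1
    · rw [Function.update_of_ne h]
      exact (hy l).1
    · rw [h, Function.update_self]
      exact hy'.2
    · rw [Function.update_of_ne h]
      exact (hy l).2

/-- The unit cell whose lower corner is given by the first `d` entries of `m`. -/
def unitCell {L : ℕ} (m : Fin (d + 1) → Fin L) : Set (Fin d → ℝ) :=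
  Set.univ.pi fun i => Set.Ico ((m i.castSucc : ℕ) : ℝ) ((m i.castSucc : ℕ) + 1)

lemma measurableSet_unitCell {L : ℕ} (m : Fin (d + 1) → Fin L) : MeasurableSet (unitCell m) :=
  MeasurableSet.univ_pi fun _ => measurableSet_Ico

lemma volume_unitCell {L : ℕ} (m : Fin (d + 1) → Fin L) : volume (unitCell m) = 1 := by
  rw [unitCell, volume_pi_pi]
  simp

/-- The step function taking the value `∏_{i<j} (mᵢ - mⱼ)²` on the cell of each lattice point `m`
with coordinate sum `N`. -/
noncomputable def latticeStep (d L N : ℕ) (y : Fin d → ℝ) : ℝ :=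
  ∑ m : Fin (d + 1) → Fin L with ∑ i, (m i : ℕ) = N,
    (unitCell m).indicator (fun _ => vandermondeSq fun i => ((m i : ℕ) : ℝ)) y

lemma integrable_indicator_unitCell {L : ℕ} (m : Fin (d + 1) → Fin L) (z : ℝ) :
    Integrable ((unitCell m).indicator fun _ => z) :=
  (integrable_indicator_iff (measurableSet_unitCell m)).2
    (integrableOn_const (by simp [volume_unitCell]))

lemma integrable_latticeStep (L N : ℕ) : Integrable (latticeStep d L N) :=
  integrable_finsetSum _ fun m _ => integrable_indicator_unitCell m _

lemma integral_latticeStep (L N : ℕ) :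
    ∫ y, latticeStep d L N y = ∑ m : Fin (d + 1) → Fin L with ∑ i, (m i : ℕ) = N,
      vandermondeSq fun i => ((m i : ℕ) : ℝ) := by
  simp only [latticeStep]
  rw [integral_finsetSum _ fun m _ => integrable_indicator_unitCell m _]
  refine Finset.sum_congr rfl fun m _ => ?_
  rw [integral_indicator (measurableSet_unitCell m), setIntegral_const, Measure.real,
    volume_unitCell]
  simp

lemma latticeStep_eq_of_mem {L N : ℕ} {m : Fin (d + 1) → Fin L} (hm : ∑ i, (m i : ℕ) = N)
    {y : Fin d → ℝ} (hy : y ∈ unitCell m) :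
    latticeStep d L N y = vandermondeSq fun i => ((m i : ℕ) : ℝ) := by
  rw [latticeStep, Finset.sum_eq_single m]
  · exact Set.indicator_of_mem hy _
  · intro m' hm' hne
    refine Set.indicator_of_notMem (fun hy' => hne ?_) _
    have hcast (i : Fin d) : (m' i.castSucc : ℕ) = m i.castSucc := by
      have h1 := hy i trivial
      have h2 := hy' i trivial
      rw [← (Nat.floor_eq_iff (h1.1.trans' (Nat.cast_nonneg _))).2 h1,
        (Nat.floor_eq_iff (h1.1.trans' (Nat.cast_nonneg _))).2 h2]
    have hsum := (Finset.mem_filter.1 hm').2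
    rw [← hm, Fin.sum_univ_castSucc, Fin.sum_univ_castSucc] at hsum
    simp only [hcast] at hsum
    funext j
    refine Fin.lastCases ?_ (fun i => ?_) j
    · exact Fin.ext (by omega)
    · exact Fin.ext (hcast i)
  · intro h
    simp [hm] at h

lemma latticeStep_eq_zero {L N : ℕ} {y : Fin d → ℝ}
    (h : ∀ m : Fin (d + 1) → Fin L, ∑ i, (m i : ℕ) = N → y ∉ unitCell m) :
    latticeStep d L N y = 0 :=
  Finset.sum_eq_zero fun m hm => Set.indicator_of_notMem (h m (Finset.mem_filter.1 hm).2) _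

end LatticeComparison

section PointwiseComparison

variable {d : ℕ}

lemma wFull_mem_Icc_of_mem_unitCell {R n e : ℕ} {m : Fin (d + 1) → Fin (R + (d + 1))}
    (hm : ∑ i, (m i : ℕ) = n + e) {y : Fin d → ℝ} (hy : y ∈ unitCell m) (j : Fin (d + 1)) :
    wFull (d + 1) n y j ∈ Set.Icc (((m j : ℕ) : ℝ) - (e + d)) ((m j : ℕ) + 1) := by
  have hy' (i : Fin d) := hy i trivial
  refine Fin.lastCases ?_ (fun i => ?_) j
  · rw [wFull_last]
    have hsum : ∑ i : Fin d, ((m i.castSucc : ℕ) : ℝ) + ((m (Fin.last d) : ℕ) : ℝ) = n + e := by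
      rw [Fin.sum_univ_castSucc] at hm
      exact_mod_cast hm
    have h1 : ∑ i : Fin d, ((m i.castSucc : ℕ) : ℝ) ≤ ∑ i, y i :=
      Finset.sum_le_sum fun i _ => (hy' i).1
    have h2 : ∑ i, y i ≤ ∑ i : Fin d, (((m i.castSucc : ℕ) : ℝ) + 1) :=
      Finset.sum_le_sum fun i _ => (hy' i).2.le
    rw [Finset.sum_add_distrib] at h2
    simp only [Finset.sum_const, Finset.card_univ, Fintype.card_fin, nsmul_eq_mul, mul_one] at h2
    have : (0 : ℝ) ≤ e := Nat.cast_nonneg e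
    constructor <;> linarith
  · rw [wFull_castSucc]
    have h1 : (0 : ℝ) ≤ e + d := by positivity
    exact ⟨by linarith [(hy' i).1], (hy' i).2.le⟩

lemma le_wFull_last_of_forall_notMem_unitCell {R n e : ℕ} {y : Fin d → ℝ}
    (hy : y ∈ scaledRegion d n R)
    (h : ∀ m : Fin (d + 1) → Fin (R + (d + 1)), ∑ i, (m i : ℕ) = n + e → y ∉ unitCell m) :
    (R : ℝ) - (e + d) ≤ wFull (d + 1) n y (Fin.last d) := by
  by_contra! hlt
  have hy0 (i : Fin d) : y i ∈ Set.Icc (0 : ℝ) R := by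
    simpa only [wFull_castSucc] using hy i.castSucc
  have hlast := (hy (Fin.last d)).1
  rw [wFull_last] at hlt hlast
  have hfloor (i : Fin d) : ⌊y i⌋₊ < R + (d + 1) := by
    have := Nat.floor_le_of_le (hy0 i).2
    omega
  have h1 : ∑ i, ((⌊y i⌋₊ : ℕ) : ℝ) ≤ ∑ i, y i :=
    Finset.sum_le_sum fun i _ => Nat.floor_le (hy0 i).1
  have h2 : ∑ i, y i ≤ ∑ i : Fin d, (((⌊y i⌋₊ : ℕ) : ℝ) + 1) :=
    Finset.sum_le_sum fun i _ => (Nat.lt_floor_add_one _).le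
  rw [Finset.sum_add_distrib] at h2
  simp only [Finset.sum_const, Finset.card_univ, Fintype.card_fin, nsmul_eq_mul, mul_one] at h2
  have hle : ∑ i, ⌊y i⌋₊ ≤ n := by
    have : ((∑ i, ⌊y i⌋₊ : ℕ) : ℝ) ≤ n := by
      push_cast
      linarith
    exact_mod_cast this
  have hlt' : n + e < R + ∑ i, ⌊y i⌋₊ := by
    have : ((n + e : ℕ) : ℝ) < ((R + ∑ i, ⌊y i⌋₊ : ℕ) : ℝ) := by
      push_cast
      linarith
    exact_mod_cast this
  refine h (Fin.snoc (α := fun _ => Fin (R + (d + 1))) (fun i => ⟨⌊y i⌋₊, hfloor i⟩)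
    ⟨n + e - ∑ i, ⌊y i⌋₊, by omega⟩) ?_ fun i _ => ?_
  · rw [Fin.sum_univ_castSucc]
    simp only [Fin.snoc_castSucc, Fin.snoc_last]
    omega
  · simp only [Fin.snoc_castSucc]
    exact ⟨Nat.floor_le (hy0 i).1, Nat.lt_floor_add_one _⟩

/-- The dominating function: `α` on the box `[-K, r + K]^d`, plus `β` on each slab. -/
noncomputable def slabBound (d : ℕ) (c r K α β : ℝ) (y : Fin d → ℝ) : ℝ :=
  (Set.Icc (fun _ => -K) (fun _ => r + K) : Set (Fin d → ℝ)).indicator (fun _ => α) y +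
    ∑ j, ((slab d c r K 0 j).indicator (fun _ => β) y + (slab d c r K r j).indicator (fun _ => β) y)

lemma le_slabBound_of_mem_Icc {c r K α β : ℝ} (hβ : 0 ≤ β) {y : Fin d → ℝ}
    (hy : y ∈ Set.Icc (fun _ => -K) (fun _ => r + K)) : α ≤ slabBound d c r K α β y := by
  rw [slabBound, Set.indicator_of_mem hy]
  exact le_add_of_nonneg_right (Finset.sum_nonneg fun j _ =>
    add_nonneg (Set.indicator_nonneg (fun _ _ => hβ) y) (Set.indicator_nonneg (fun _ _ => hβ) y))

lemma le_slabBound_of_mem_slab {c r K α β : ℝ} (hα : 0 ≤ α) (hβ : 0 ≤ β) {y : Fin d → ℝ}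
    {j : Fin (d + 1)} (hy : y ∈ slab d c r K 0 j ∨ y ∈ slab d c r K r j) :
    β ≤ slabBound d c r K α β y := by
  rw [slabBound]
  refine le_add_of_nonneg_of_le (Set.indicator_nonneg (fun _ _ => hα) y) (le_trans ?_
    (Finset.single_le_sum (f := fun j => (slab d c r K 0 j).indicator (fun _ => β) y +
      (slab d c r K r j).indicator (fun _ => β) y) (fun j _ => add_nonneg
        (Set.indicator_nonneg (fun _ _ => hβ) y) (Set.indicator_nonneg (fun _ _ => hβ) y))
      (Finset.mem_univ j)))
  rcases hy with hy | hy <;> rw [Set.indicator_of_mem hy]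
  · exact le_add_of_nonneg_right (Set.indicator_nonneg (fun _ _ => hβ) y)
  · exact le_add_of_nonneg_left (Set.indicator_nonneg (fun _ _ => hβ) y)

lemma slabBound_nonneg {c r K α β : ℝ} (hα : 0 ≤ α) (hβ : 0 ≤ β) (y : Fin d → ℝ) :
    0 ≤ slabBound d c r K α β y :=
  add_nonneg (Set.indicator_nonneg (fun _ _ => hα) y) (Finset.sum_nonneg fun _ _ =>
    add_nonneg (Set.indicator_nonneg (fun _ _ => hβ) y) (Set.indicator_nonneg (fun _ _ => hβ) y))

lemma integrable_indicator_slab (c r K b β : ℝ) (j : Fin (d + 1)) :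
    Integrable ((slab d c r K b j).indicator fun _ => β) :=
  (integrable_indicator_iff (isClosed_slab c r K b j).measurableSet).2
    (integrableOn_const ((measure_mono (slab_subset_Icc c r K b j)).trans_lt
      isCompact_Icc.measure_lt_top).ne)

lemma integrable_indicator_box (r K α : ℝ) :
    Integrable ((Set.Icc (fun _ => -K) (fun _ => r + K) : Set (Fin d → ℝ)).indicator fun _ => α) :=
  (integrable_indicator_iff measurableSet_Icc).2
    (integrableOn_const isCompact_Icc.measure_lt_top.ne)

lemma integrable_slabBound (c r K α β : ℝ) : Integrable (slabBound d c r K α β) :=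
  (integrable_indicator_box r K α).add (integrable_finsetSum _ fun j _ =>
    (integrable_indicator_slab c r K 0 β j).add (integrable_indicator_slab c r K r β j))

lemma mul_integral_slabBound_le (hd : 0 < d) {c r K α β : ℝ} (hr : 0 ≤ r) (hK : 0 ≤ K)
    (hβ : 0 ≤ β) : r * ∫ y, slabBound d c r K α β y ≤
      (r * α + 4 * K * (d + 1) * β) * (r + 2 * K) ^ d := by
  have hslab (b : ℝ) (j : Fin (d + 1)) : r * ∫ y, (slab d c r K b j).indicator (fun _ => β) y ≤
      2 * K * (r + 2 * K) ^ d * β := by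
    rw [integral_indicator (isClosed_slab c r K b j).measurableSet, setIntegral_const, smul_eq_mul,
      ← mul_assoc]
    exact mul_le_mul_of_nonneg_right (mul_volume_real_slab_le hd hr hK j) hβ
  have hbox : ∫ y, (Set.Icc (fun _ => -K) (fun _ => r + K) : Set (Fin d → ℝ)).indicator
      (fun _ => α) y = (r + 2 * K) ^ d * α := by
    rw [integral_indicator measurableSet_Icc, setIntegral_const, smul_eq_mul, Measure.real,
      Real.volume_Icc_pi_toReal fun _ => by linarith]
    simp only [Finset.prod_const, Finset.card_univ, Fintype.card_fin]
    ring
  have hpair (j : Fin (d + 1)) : Integrable fun y => (slab d c r K 0 j).indicator (fun _ => β) y +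
      (slab d c r K r j).indicator (fun _ => β) y :=
    (integrable_indicator_slab c r K 0 β j).add (integrable_indicator_slab c r K r β j)
  simp only [slabBound]
  rw [integral_add (integrable_indicator_box r K α) (integrable_finsetSum _ fun j _ => hpair j),
    integral_finsetSum _ fun j _ => hpair j, hbox, mul_add, Finset.mul_sum]
  have hsum : ∑ j : Fin (d + 1), r * ∫ y, ((slab d c r K 0 j).indicator (fun _ => β) y +
      (slab d c r K r j).indicator (fun _ => β) y) ≤
      ∑ _j : Fin (d + 1), 4 * K * (r + 2 * K) ^ d * β := by
    refine Finset.sum_le_sum fun j _ => ?_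
    rw [integral_add (integrable_indicator_slab c r K 0 β j)
      (integrable_indicator_slab c r K r β j), mul_add]
    linarith [hslab 0 j, hslab r j]
  simp only [Finset.sum_const, Finset.card_univ, Fintype.card_fin, nsmul_eq_mul] at hsum
  push_cast at hsum
  linarith

lemma abs_latticeStep_sub_indicator_le {R n e : ℕ} {K M : ℝ} (hK : (e : ℝ) + 2 * (d + 1) ≤ K)
    (hM : R + K ≤ M) (y : Fin d → ℝ) :
    |latticeStep d (R + (d + 1)) (n + e) y -
      (scaledRegion d n R).indicator (fun y => vandermondeSq (wFull (d + 1) n y)) y| ≤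
    slabBound d n R K (2 * K * (d + 1) ^ 2 * (2 * M) ^ ((d + 1) * d) / M)
      ((2 * M) ^ ((d + 1) * d)) y := by
  have he : (0 : ℝ) ≤ e := Nat.cast_nonneg e
  have hd : (0 : ℝ) ≤ d := Nat.cast_nonneg d
  have hR : (0 : ℝ) ≤ R := Nat.cast_nonneg R
  have hK0 : 0 < K := by linarith
  have hM0 : 0 < M := by linarith
  have hα : 0 ≤ 2 * K * (d + 1) ^ 2 * (2 * M) ^ ((d + 1) * d) / M := by positivity
  have hβ : 0 ≤ (2 * M) ^ ((d + 1) * d) := by positivity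
  have hreg (hy : y ∈ scaledRegion d n R) (j : Fin (d + 1)) : |wFull (d + 1) n y j| ≤ M := by
    rw [abs_of_nonneg (hy j).1]
    linarith [(hy j).2]
  by_cases hex : ∃ m : Fin (d + 1) → Fin (R + (d + 1)), ∑ i, (m i : ℕ) = n + e ∧ y ∈ unitCell m
  · obtain ⟨m, hm, hym⟩ := hex
    have hmR (j : Fin (d + 1)) : ((m j : ℕ) : ℝ) ≤ R + d := by
      have := (m j).isLt
      exact_mod_cast (by omega : (m j : ℕ) ≤ R + d)
    have hm0 (j : Fin (d + 1)) : (0 : ℝ) ≤ ((m j : ℕ) : ℝ) := Nat.cast_nonneg _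
    have hclose := wFull_mem_Icc_of_mem_unitCell hm hym
    have hmM (j : Fin (d + 1)) : |((m j : ℕ) : ℝ)| ≤ M := by
      rw [abs_of_nonneg (hm0 j)]
      linarith [hmR j]
    have hbox (i : Fin d) : y i ∈ Set.Icc (-K) (R + K) := by
      have h := hclose i.castSucc
      rw [wFull_castSucc] at h
      exact ⟨by linarith [h.1, hm0 i.castSucc], by linarith [h.2, hmR i.castSucc]⟩
    rw [latticeStep_eq_of_mem hm hym]
    by_cases hy : y ∈ scaledRegion d n R
    · rw [Set.indicator_of_mem hy]
      refine le_trans ?_ (le_slabBound_of_mem_Icc hβ ⟨fun i => (hbox i).1, fun i => (hbox i).2⟩)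
      rw [le_div_iff₀' hM0]
      have := mul_abs_vandermondeSq_sub_le (K := K) hM0 hmM (hreg hy) (fun j => by
        rw [abs_le]
        constructor <;> linarith [(hclose j).1, (hclose j).2]) hK0.le
      simpa using this
    · rw [Set.indicator_of_notMem hy, sub_zero]
      refine (abs_vandermondeSq_le hmM).trans ?_
      obtain ⟨j, hj⟩ : ∃ j, wFull (d + 1) n y j ∉ Set.Icc (0 : ℝ) R := by
        by_contra! h
        exact hy h
      refine le_slabBound_of_mem_slab (j := j) hα hβ ?_
      rw [Set.mem_Icc, not_and_or, not_le, not_le] at hj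
      rcases hj with hj | hj
      · exact Or.inl ⟨hbox, by linarith [(hclose j).1, hm0 j], by linarith⟩
      · exact Or.inr ⟨hbox, by linarith, by linarith [(hclose j).2, hmR j]⟩
  · push Not at hex
    rw [latticeStep_eq_zero hex, zero_sub, abs_neg]
    by_cases hy : y ∈ scaledRegion d n R
    · rw [Set.indicator_of_mem hy]
      refine (abs_vandermondeSq_le (hreg hy)).trans
        (le_slabBound_of_mem_slab (j := Fin.last d) hα hβ (Or.inr ⟨fun i => ?_, ?_, ?_⟩))
      · have h := hy i.castSucc
        rw [wFull_castSucc] at h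
        exact ⟨by linarith [h.1], by linarith [h.2]⟩
      · linarith [le_wFull_last_of_forall_notMem_unitCell hy hex]
      · linarith [(hy (Fin.last d)).2]
    · rw [Set.indicator_of_notMem hy, abs_zero]
      exact slabBound_nonneg hα hβ y

end PointwiseComparison

section Main

lemma abs_latticeSum_sub_setIntegral_le {d : ℕ} (hd : 0 < d) (e : ℕ) :
    ∃ C > (0 : ℝ), ∀ R n : ℕ, 1 ≤ R →
      |(∑ m : Fin (d + 1) → Fin (R + (d + 1)) with ∑ i, (m i : ℕ) = n + e,
          vandermondeSq fun i => ((m i : ℕ) : ℝ)) -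
        ∫ y in scaledRegion d n R, vandermondeSq (wFull (d + 1) n y)| * R ≤
      C * (R : ℝ) ^ ((d + 1) * d + d) := by
  set K : ℝ := e + 2 * (d + 1) with hKdef
  have hK : 0 < K := by positivity
  set D : ℝ := (2 * (K + 1)) ^ ((d + 1) * d)
  refine ⟨(2 * K * (d + 1) ^ 2 * D / (K + 1) + 4 * K * (d + 1) * D) * (1 + 2 * K) ^ d,
    by positivity, fun R n hR => ?_⟩
  have hR1 : (1 : ℝ) ≤ R := by exact_mod_cast hR
  have hR0 : (0 : ℝ) < R := by linarith
  set M : ℝ := (K + 1) * R with hM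
  have hMD : (2 * M) ^ ((d + 1) * d) = D * (R : ℝ) ^ ((d + 1) * d) := by
    rw [← mul_pow, hM, mul_assoc]
  have hmeas : MeasurableSet (scaledRegion d n R) := (isCompact_scaledRegion _ _).measurableSet
  have hsub : (∑ m : Fin (d + 1) → Fin (R + (d + 1)) with ∑ i, (m i : ℕ) = n + e,
      vandermondeSq fun i => ((m i : ℕ) : ℝ)) -
        ∫ y in scaledRegion d n R, vandermondeSq (wFull (d + 1) n y) =
      ∫ y, (latticeStep d (R + (d + 1)) (n + e) y - (scaledRegion d n R).indicator
        (fun y => vandermondeSq (wFull (d + 1) n y)) y) := by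
    have hind := integral_indicator (μ := volume)
      (f := fun y : Fin d → ℝ => vandermondeSq (wFull (d + 1) n y)) hmeas
    exact (congrArg₂ (· - ·) (integral_latticeStep _ _).symm hind.symm).trans
      (integral_sub (integrable_latticeStep _ _) ((integrable_indicator_iff hmeas).2
        (integrableOn_vandermondeSq _ _))).symm
  have hRM : (R : ℝ) + K ≤ M := by nlinarith
  rw [hsub, mul_comm]
  have hle := norm_integral_le_of_norm_le
    (f := fun y => latticeStep d (R + (d + 1)) (n + e) y - (scaledRegion d n R).indicator
      (fun y => vandermondeSq (wFull (d + 1) n y)) y) (integrable_slabBound (d := d) (n : ℝ) R K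
    (2 * K * (d + 1) ^ 2 * (2 * M) ^ ((d + 1) * d) / M) ((2 * M) ^ ((d + 1) * d)))
    (Filter.Eventually.of_forall fun y => abs_latticeStep_sub_indicator_le (R := R) (n := n)
      (e := e) hKdef.ge hRM y)
  refine (mul_le_mul_of_nonneg_left hle hR0.le).trans
    ((mul_integral_slabBound_le hd hR0.le hK.le (by positivity)).trans ?_)
  have h1 : (R + 2 * K) ^ d ≤ (1 + 2 * K) ^ d * (R : ℝ) ^ d := by
    rw [← mul_pow]
    gcongr
    nlinarith
  rw [hMD]
  have h2 : (R : ℝ) * (2 * K * (d + 1) ^ 2 * (D * (R : ℝ) ^ ((d + 1) * d)) / M) =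
      2 * K * (d + 1) ^ 2 * D / (K + 1) * (R : ℝ) ^ ((d + 1) * d) := by
    rw [hM]
    field_simp
  rw [h2]
  calc (2 * K * (d + 1) ^ 2 * D / (K + 1) * (R : ℝ) ^ ((d + 1) * d) +
        4 * K * (d + 1) * (D * (R : ℝ) ^ ((d + 1) * d))) * (R + 2 * K) ^ d
      ≤ (2 * K * (d + 1) ^ 2 * D / (K + 1) * (R : ℝ) ^ ((d + 1) * d) +
        4 * K * (d + 1) * (D * (R : ℝ) ^ ((d + 1) * d))) * ((1 + 2 * K) ^ d * (R : ℝ) ^ d) := by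
        gcongr
    _ = _ := by
        rw [pow_add]
        ring

lemma gammaK_mul_pow {d n R : ℕ} (hR : 1 ≤ R) :
    gammaK (d + 1) ((n : ℝ) / R) * (R : ℝ) ^ ((d + 1) * d + d) =
      (1 / (((d + 1).factorial : ℝ) * (∏ i ∈ Finset.range (d + 1), (Nat.factorial i : ℝ)) ^ 2)) *
        ∫ y in scaledRegion d n R, vandermondeSq (wFull (d + 1) n y) := by
  have hR0 : (0 : ℝ) < R := by exact_mod_cast hR
  have h := setIntegral_scaledRegion (d := d) hR0 ((n : ℝ) / R)
  rw [mul_div_cancel₀ _ hR0.ne'] at h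
  rw [h, gammaK, mul_assoc, mul_comm ((R : ℝ) ^ _)]
  rfl

lemma vandermondeSq_fin_one (x : Fin (0 + 1) → ℝ) : vandermondeSq x = 1 :=
  Finset.prod_eq_one fun p hp => by
    have := (Finset.mem_filter.1 hp).2
    omega

lemma latticeSum_eq_one {R n : ℕ} (hn : n ≤ R) :
    ∑ m : Fin (0 + 1) → Fin (R + (0 + 1)) with ∑ i, (m i : ℕ) = n + ∑ i : Fin (0 + 1), (i : ℕ),
      vandermondeSq (fun i => ((m i : ℕ) : ℝ)) = 1 := by
  rw [Finset.sum_eq_single fun _ => ⟨n, by omega⟩]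
  · exact vandermondeSq_fin_one _
  · intro m hm hne
    refine absurd ?_ hne
    have := (Finset.mem_filter.1 hm).2
    funext i
    fin_cases i
    simpa [Fin.ext_iff] using this
  · intro h
    simp at h

lemma setIntegral_scaledRegion_zero {R n : ℕ} (hn : n ≤ R) :
    ∫ y in scaledRegion 0 n R, vandermondeSq (wFull (0 + 1) n y) = 1 := by
  have huniv : scaledRegion 0 n R = Set.univ := by
    refine Set.eq_univ_of_forall fun y j => ?_
    fin_cases j
    have := wFull_last (n : ℝ) y
    simp only [Finset.univ_eq_empty, Finset.sum_empty, sub_zero] at this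
    refine this.symm ▸ ⟨Nat.cast_nonneg n, by exact_mod_cast hn⟩
  rw [huniv, Measure.restrict_univ]
  simp only [vandermondeSq_fin_one]
  simp [Measure.real, volume_pi]

theorem I_k_asymptotic (k : ℕ) (hk : 1 ≤ k) :
    ∃ C > (0 : ℝ), ∀ R n : ℕ, 1 ≤ R → n ≤ k * R →
      ∀ (μ : Measure (Matrix.unitaryGroup (Fin R) ℂ)),
        μ.IsHaarMeasure → IsProbabilityMeasure μ →
        |matrixIntegral k n R μ - gammaK k ((n : ℝ) / R) * (R : ℝ) ^ ((k : ℝ) ^ 2 - 1)|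
          ≤ C * (R : ℝ) ^ ((k : ℝ) ^ 2 - 2) := by
  obtain ⟨d, rfl⟩ : ∃ d, k = d + 1 := ⟨k - 1, by omega⟩
  set κ : ℝ := 1 / (((d + 1).factorial : ℝ) *
    (∏ i ∈ Finset.range (d + 1), (Nat.factorial i : ℝ)) ^ 2) with hκ
  have hκ0 : 0 ≤ κ := by positivity
  obtain ⟨C, hC, hbound⟩ : ∃ C > (0 : ℝ), ∀ R n : ℕ, 1 ≤ R → n ≤ (d + 1) * R →
      |(∑ m : Fin (d + 1) → Fin (R + (d + 1)) with
          ∑ i, (m i : ℕ) = n + ∑ i : Fin (d + 1), (i : ℕ),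
          vandermondeSq fun i => ((m i : ℕ) : ℝ)) -
        ∫ y in scaledRegion d n R, vandermondeSq (wFull (d + 1) n y)| * R ≤
      C * (R : ℝ) ^ ((d + 1) * d + d) := by
    rcases Nat.eq_zero_or_pos d with rfl | hd
    · refine ⟨1, one_pos, fun R n _ hn => ?_⟩
      rw [latticeSum_eq_one (by omega), setIntegral_scaledRegion_zero (by omega)]
      simp
    · obtain ⟨C, hC, h⟩ := abs_latticeSum_sub_setIntegral_le hd (∑ i : Fin (d + 1), (i : ℕ))
      exact ⟨C, hC, fun R n hR _ => h R n hR⟩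
  refine ⟨κ * C + 1, by positivity, fun R n hR hn μ hμ hμ' => ?_⟩
  have hR0 : (0 : ℝ) < R := by exact_mod_cast hR
  have hexp : (R : ℝ) ^ (((d + 1 : ℕ) : ℝ) ^ 2 - 1) = (R : ℝ) ^ ((d + 1) * d + d) := by
    rw [← Real.rpow_natCast (R : ℝ) ((d + 1) * d + d)]
    congr 1
    push_cast
    ring
  have hexp' : (R : ℝ) ^ (((d + 1 : ℕ) : ℝ) ^ 2 - 2) = (R : ℝ) ^ ((d + 1) * d + d) / R := by
    rw [← hexp, ← Real.rpow_sub_one hR0.ne', sub_sub, one_add_one_eq_two]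
  have hlat : matrixIntegral (d + 1) n R μ = κ *
      ∑ m : Fin (d + 1) → Fin (R + (d + 1)) with
        ∑ i, (m i : ℕ) = n + ∑ i : Fin (d + 1), (i : ℕ),
        vandermondeSq fun i => ((m i : ℕ) : ℝ) := matrixIntegral_eq_latticeSum (d + 1) μ hn
  rw [hexp, hexp', gammaK_mul_pow hR, hlat, ← hκ, ← mul_sub, abs_mul, abs_of_nonneg hκ0,
    ← mul_div_assoc, le_div_iff₀ hR0, mul_assoc]
  have h := mul_le_mul_of_nonneg_left (hbound R n hR hn) hκ0
  have hpow : 0 ≤ (R : ℝ) ^ ((d + 1) * d + d) := by positivity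
  linarith

end Main
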